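/- arXiv:2602.14537 — 6 statements merged into one kernel-verified Lean document; each statement's English description precedes it below -/
import Mathlib

section
/- Consider a discrete-time controlled system x⁺ = f(x,u) and fix N ≥ 1. Suppose the input set 𝒰 ⊆ ℝ^m is compact and has non-empty interior, and let 𝒰̄ := 𝒰 × ⋯ × 𝒰 (N-fold Cartesian product). If for every ε > 0 there exist a function Φ_ε : 𝒳 → ℝ^n and a matrix B_ε ∈ ℝ^{n × Nm} (independent of x) such that sup over x ∈ 𝒳 and u_{0:N−1} ∈ 𝒰̄ of ‖f_N(x, u_{0:N−1}) − Φ_ε(x) − B_ε·col(u_0, …, u_{N−1})‖₂ ≤ ε, then the system admits an (exact) N-step linear predictor. -/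
open Matrix

noncomputable section

/-- The `N`-step iterated dynamics `f_N`, defined by `f_1(x,u₀) = f(x,u₀)` and
`f_{j+1}(x, u_{0:j}) = f(f_j(x, u_{0:j-1}), u_j)` (with `f_0(x) = x`). -/
def iterDyn {ι : Type} {m : ℕ} (f : (ι → ℝ) → (Fin m → ℝ) → (ι → ℝ)) :
    (N : ℕ) → (ι → ℝ) → (Fin N → (Fin m → ℝ)) → (ι → ℝ)
  | 0, x, _ => x
  | N + 1, x, u => f (iterDyn f N x (fun i => u i.castSucc)) (u (Fin.last N))

/-- The system `x⁺ = f(x,u)` admits an `N`-step linear predictor on `X`, `U`: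
`f_N(x, u_{0:N-1}) = Φ(x) + B · col(u_0, …, u_{N-1})`. -/
def HasNStepLinearPredictor {ι : Type} [Fintype ι] {m : ℕ}
    (f : (ι → ℝ) → (Fin m → ℝ) → (ι → ℝ))
    (X : Set (ι → ℝ)) (U : Set (Fin m → ℝ)) (N : ℕ) : Prop :=
  ∃ (Φ : (ι → ℝ) → (ι → ℝ)) (B : Matrix ι (Fin N × Fin m) ℝ),
    ∀ x ∈ X, ∀ u : Fin N → (Fin m → ℝ), (∀ i, u i ∈ U) →
      iterDyn f N x u = Φ x + B.mulVec (fun p => u p.1 p.2)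

/-!
Fix an admissible input sequence `v₀`. Subtracting the approximations of `f_N(x, v)` and
`f_N(x, v₀)` cancels `Φ_ε(x)`, so `B_ε (v - v₀)` converges to `f_N(x, v) - f_N(x, v₀)`. The vectors
along which a family of linear maps converges form a subspace, on which the limit is linear; any
linear extension of that limit to the whole space is an exact input matrix `B`.
-/

open Filter Topology

section LinearLimit

variable {κ R E G : Type*} {l : Filter κ} [AddCommGroup E] [AddCommGroup G] [TopologicalSpace G]

variable (l) in
/-- The submodule of vectors along which the linear maps `L k` converge pointwise as `k` tends
to `l`; it may be proper, and carries the linear part common to all states. -/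
def convergenceSubmodule [Semiring R] [Module R E] [Module R G] [ContinuousAdd G]
    [ContinuousConstSMul R G] (L : κ → E →ₗ[R] G) : Submodule R E where
  carrier := {v | ∃ y, Tendsto (fun k => L k v) l (𝓝 y)}
  zero_mem' := ⟨0, by simpa only [map_zero] using tendsto_const_nhds⟩
  add_mem' := fun ⟨y, hy⟩ ⟨z, hz⟩ => ⟨y + z, by simpa only [map_add] using hy.add hz⟩
  smul_mem' := fun c _ ⟨y, hy⟩ => ⟨c • y, by simpa only [map_smul] using hy.const_smul c⟩

variable [DivisionRing R] [Module R E] [Module R G] [ContinuousConstSMul R G] [T2Space G]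
  [l.NeBot]

variable (l) in
theorem exists_linearMap_eq_of_tendsto [ContinuousAdd G] (L : κ → E →ₗ[R] G) :
    ∃ M : E →ₗ[R] G, ∀ v y, Tendsto (fun k => L k v) l (𝓝 y) → M v = y := by
  choose g hg using fun v : convergenceSubmodule l L => v.2
  obtain ⟨M, hM⟩ := (linearMapOfTendsto g (fun k => (L k).domRestrict (convergenceSubmodule l L))
    (tendsto_pi_nhds.2 hg)).exists_extend
  refine ⟨M, fun v y hy => ?_⟩
  have hMv : M v = g ⟨v, y, hy⟩ := LinearMap.congr_fun hM ⟨v, y, hy⟩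
  exact hMv.trans (tendsto_nhds_unique (hg ⟨v, y, hy⟩) hy)

theorem exists_eq_add_linearMap_of_tendsto [IsTopologicalAddGroup G] {α : Type*} {X : Set α}
    {V : Set E} {F : α → E → G} {Φ : κ → α → G} {L : κ → E →ₗ[R] G}
    (hF : ∀ x ∈ X, ∀ v ∈ V, Tendsto (fun k => Φ k x + L k v) l (𝓝 (F x v))) :
    ∃ (φ : α → G) (M : E →ₗ[R] G), ∀ x ∈ X, ∀ v ∈ V, F x v = φ x + M v := by
  rcases V.eq_empty_or_nonempty with rfl | ⟨v₀, hv₀⟩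
  · exact ⟨0, 0, by simp⟩
  obtain ⟨M, hM⟩ := exists_linearMap_eq_of_tendsto l L
  refine ⟨fun x => F x v₀ - M v₀, M, fun x hx v hv => ?_⟩
  have hlim : Tendsto (fun k => L k (v - v₀)) l (𝓝 (F x v - F x v₀)) := by
    simpa only [map_sub, add_sub_add_left_eq_sub] using (hF x hx v hv).sub (hF x hx v₀ hv₀)
  have hdiff : M v - M v₀ = F x v - F x v₀ := by rw [← map_sub, hM _ _ hlim]
  rw [sub_add_eq_add_sub, add_sub_assoc, hdiff, add_sub_cancel]

end LinearLimit

theorem tendsto_pi_of_sqrt_sum_sq_sub_le {κ ι : Type*} [Fintype ι] {l : Filter κ}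
    {g : κ → ι → ℝ} {y : ι → ℝ} {r : κ → ℝ} (hr : Tendsto r l (𝓝 0))
    (hg : ∀ᶠ k in l, √(∑ i, (y i - g k i) ^ 2) ≤ r k) : Tendsto g l (𝓝 y) := by
  refine tendsto_pi_nhds.2 fun i => tendsto_iff_dist_tendsto_zero.2 <|
    squeeze_zero' (.of_forall fun _ => dist_nonneg) (hg.mono fun k hk => ?_) hr
  calc dist (g k i) (y i) = |y i - g k i| := by rw [dist_comm, Real.dist_eq]
    _ ≤ √(∑ j, (y j - g k j) ^ 2) := Real.abs_le_sqrt <|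
      Finset.single_le_sum (f := fun j => (y j - g k j) ^ 2) (fun _ _ => sq_nonneg _)
        (Finset.mem_univ i)
    _ ≤ r k := hk

theorem exact_linear_predictor_from_uniform_approximation_general
    {ι : Type} [Fintype ι] {m : ℕ} {f : (ι → ℝ) → (Fin m → ℝ) → (ι → ℝ)}
    {X : Set (ι → ℝ)} {U : Set (Fin m → ℝ)} {N : ℕ} {κ : Type*} {l : Filter κ} [l.NeBot]
    {Φ : κ → (ι → ℝ) → (ι → ℝ)} {B : κ → Matrix ι (Fin N × Fin m) ℝ}
    (hlim : ∀ x ∈ X, ∀ u : Fin N → (Fin m → ℝ), (∀ i, u i ∈ U) →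
      Tendsto (fun k => Φ k x + (B k).mulVec (fun p => u p.1 p.2)) l (𝓝 (iterDyn f N x u))) :
    HasNStepLinearPredictor f X U N := by
  obtain ⟨φ, M, hM⟩ := exists_eq_add_linearMap_of_tendsto (X := X)
    (V := {v | ∀ i, Function.curry v i ∈ U}) (F := fun x v => iterDyn f N x (Function.curry v))
    (L := fun k => (B k).mulVecLin) fun x hx v hv => hlim x hx (Function.curry v) hv
  refine ⟨φ, LinearMap.toMatrix' M, fun x hx u hu => ?_⟩
  rw [LinearMap.toMatrix'_mulVec]
  exact hM x hx (Function.uncurry u) hu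

/-- **Exact linear predictors from uniform approximation.**  If for every `ε > 0` the
`N`-step evolution can be approximated, uniformly over states `x ∈ 𝒳` and admissible input
sequences, within `ε` (in the 2-norm) by a map of the form `Φ_ε(x) + B_ε u_{0:N-1}`, and the
input set `𝒰` is compact with non-empty interior, then the system admits an exact `N`-step
linear predictor. -/
theorem exact_linear_predictor_from_uniform_approximation
    {n m : ℕ} (f : (Fin n → ℝ) → (Fin m → ℝ) → (Fin n → ℝ))
    (X : Set (Fin n → ℝ)) (U : Set (Fin m → ℝ)) (N : ℕ) (hN : 1 ≤ N)
    (hf : ∀ x ∈ X, ∀ u ∈ U, f x u ∈ X)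
    (hUcompact : IsCompact U) (hUint : (interior U).Nonempty)
    (happrox : ∀ ε : ℝ, 0 < ε →
      ∃ (Φ : (Fin n → ℝ) → (Fin n → ℝ)) (B : Matrix (Fin n) (Fin N × Fin m) ℝ),
        ∀ x ∈ X, ∀ u : Fin N → (Fin m → ℝ), (∀ i, u i ∈ U) →
          Real.sqrt (∑ i, (iterDyn f N x u i -
            (Φ x + B.mulVec (fun p => u p.1 p.2)) i) ^ 2) ≤ ε) :
    HasNStepLinearPredictor f X U N := by
  choose! Φ B h using happrox
  exact exact_linear_predictor_from_uniform_approximation_general (l := 𝓝[>] 0) fun x hx u hu =>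
    tendsto_pi_of_sqrt_sum_sq_sub_le (tendsto_nhdsWithin_of_tendsto_nhds tendsto_id) <|
      eventually_mem_nhdsWithin.mono fun ε hε => h ε hε x hx u hu
end
end

section
/- (Equivalence of (n+1)-step linear predictability and the CAP structure.) Consider a discrete-time controlled system x⁺ = f(x,u) with 𝒳 ⊆ ℝ^n open and convex, 𝒰 ⊆ ℝ^m open, and f : 𝒳 × 𝒰 → 𝒳 surjective. Then the system admits an N-step linear predictor for every N ∈ {1, …, n+1} if and only if the system admits a control-affine preserved (CAP) structure. -/
open Matrix

noncomputable section

/-- The system admits a control-affine preserved (CAP) structure: there are an invertible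
change of coordinates `T` (with inverse `S`), a partition of the state into `x̃₁ ∈ ℝ^{n₁}` and
`x̃₂ ∈ ℝ^{n₂}`, functions `g`, `h` and matrices `C`, `D` such that in the new coordinates
`x̃₁⁺ = g(x̃₂) + C x̃₁ + D u` and `x̃₂⁺ = h(x̃₂)`. -/
def HasCAP {ι : Type} [Fintype ι] [DecidableEq ι] {m : ℕ}
    (f : (ι → ℝ) → (Fin m → ℝ) → (ι → ℝ))
    (X : Set (ι → ℝ)) (U : Set (Fin m → ℝ)) : Prop :=
  ∃ (n₁ n₂ : ℕ) (T : Matrix (Fin n₁ ⊕ Fin n₂) ι ℝ) (S : Matrix ι (Fin n₁ ⊕ Fin n₂) ℝ),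
    T * S = 1 ∧ S * T = 1 ∧
    ∃ (g : (Fin n₂ → ℝ) → (Fin n₁ → ℝ)) (h : (Fin n₂ → ℝ) → (Fin n₂ → ℝ))
      (C : Matrix (Fin n₁) (Fin n₁) ℝ) (D : Matrix (Fin n₁) (Fin m) ℝ),
      ∀ x ∈ X, ∀ u ∈ U,
        T.mulVec (f x u) =
          Sum.elim
            (g (fun i => T.mulVec x (Sum.inr i)) +
              C.mulVec (fun i => T.mulVec x (Sum.inl i)) + D.mulVec u)
            (h (fun i => T.mulVec x (Sum.inr i)))

/-!
The one-step predictor gives `f x u = φ x + B u`. Perturb the first input of a trajectory by `t • v`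
for small `t`. If `φ` is affine with slope operator `M` along `B v, …, M ^ (k - 1) (B v)`, the state
after `k + 1` steps moves by `t • M ^ k (B v)`, while by the `(k + 2)`-step predictor the next state
moves linearly in `t`: so `φ` is affine along `M ^ k (B v)` too, at every point of `X` because `f`
is surjective. By Cayley–Hamilton, the horizons up to `n + 1` cover the whole reachable subspace
`V` of the pair `(M, B)`. Hence `φ - M` factors through the quotient by `V`, and coordinates adapted
to `V` display the CAP structure.

Conversely, in a CAP structure the input only ever moves the state along an invariant subspace `V`
on which the dynamics is linear.
-/

open Function Topology

section LinearAlgebra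

variable {K E F : Type*} [DivisionRing K] [AddCommGroup E] [Module K E] [AddCommGroup F]
  [Module K F]

theorem exists_linearMap_forall_mem_graph (G : Submodule K (E × F)) :
    ∃ M : E →ₗ[K] F, ∀ p ∈ G, (p.1, M p.1) ∈ G := by
  obtain ⟨s, hs⟩ := LinearMap.exists_rightInverse_of_surjective
    ((LinearMap.fst K E F).submoduleMap G)
    (LinearMap.range_eq_top.2 (LinearMap.submoduleMap_surjective _ _))
  obtain ⟨M, hM⟩ := LinearMap.exists_extend (LinearMap.snd K E F ∘ₗ G.subtype ∘ₗ s)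
  refine ⟨M, fun p hp => ?_⟩
  let d : G.map (LinearMap.fst K E F) := ⟨p.1, p, hp, rfl⟩
  have hfst : (s d : E × F).1 = p.1 := congrArg Subtype.val (LinearMap.congr_fun hs d)
  have hsnd : (s d : E × F).2 = M p.1 := (LinearMap.congr_fun hM d).symm
  rw [← hfst, ← hsnd.trans (congrArg M hfst.symm)]
  exact (s d).2

theorem exists_linearEquiv_prod_mem_iff [FiniteDimensional K E] (V : Submodule K E) :
    ∃ (n₁ n₂ : ℕ) (e : E ≃ₗ[K] (Fin n₁ → K) × (Fin n₂ → K)), ∀ x, x ∈ V ↔ (e x).2 = 0 := by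
  obtain ⟨Q, hVQ⟩ := V.exists_isCompl
  refine ⟨_, _, (V.prodEquivOfIsCompl Q hVQ).symm ≪≫ₗ
    (Module.finBasis K V).equivFun.prodCongr (Module.finBasis K Q).equivFun, fun x => ?_⟩
  rw [← V.prodEquivOfIsCompl_symm_apply_snd_eq_zero Q hVQ]
  exact ((Module.finBasis K Q).equivFun.map_eq_zero_iff).symm

end LinearAlgebra

section Slope

variable {E F : Type*} [AddCommGroup E] [Module ℝ E] [AddCommGroup F] [Module ℝ F]
  {φ : E → F} {X : Set E} {v : E} {w : F}

/-- Local affinity of `φ` on `X` in the direction `v`, with the slope `w` common to all base points.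
Staying in `X` is part of the condition, which makes slopes add up on every convex `X`. -/
def HasSlopeOn (φ : E → F) (X : Set E) (v : E) (w : F) : Prop :=
  ∀ y ∈ X, ∀ᶠ t : ℝ in 𝓝 0, y + t • v ∈ X ∧ φ (y + t • v) = φ y + t • w

theorem HasSlopeOn.map_add_smul (h : HasSlopeOn φ X v w) (hX : Convex ℝ X) {y : E} (hy : y ∈ X)
    {t : ℝ} (ht : y + t • v ∈ X) : φ (y + t • v) = φ y + t • w := by
  let I : Set ℝ := {s | y + s • v ∈ X}
  have hI : IsPreconnected I :=
    ((hX.translate_preimage_right y).linear_preimage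
      (LinearMap.toSpanSingleton ℝ E v)).isPreconnected
  have hlocal : ∀ a ∈ I, ∀ᶠ b in 𝓝[I] a, φ (y + b • v) = φ (y + a • v) + (b - a) • w := by
    intro a ha
    have hsub : Filter.Tendsto (fun b : ℝ => b - a) (𝓝[I] a) (𝓝 0) := by
      simpa using ((continuous_sub_right a).tendsto a).mono_left nhdsWithin_le_nhds
    filter_upwards [hsub.eventually (h _ ha)] with b hb
    rw [← hb.2]
    congr 1
    module
  have hglobal := hI.induction₂ (fun a b => φ (y + b • v) = φ (y + a • v) + (b - a) • w) hlocal
    (fun a b c _ _ _ hab hbc => by rw [hbc, hab]; module)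
    (fun a b _ _ hab => by rw [hab]; module)
    (show (0 : ℝ) ∈ I by simpa [I] using hy) (show t ∈ I from ht)
  simpa using hglobal

theorem HasSlopeOn.zero : HasSlopeOn φ X 0 0 := fun y hy => by simp [hy]

theorem HasSlopeOn.smul (h : HasSlopeOn φ X v w) (c : ℝ) : HasSlopeOn φ X (c • v) (c • w) := by
  intro y hy
  have hmul : Filter.Tendsto (fun t : ℝ => t * c) (𝓝 0) (𝓝 0) := by
    simpa using (continuous_mul_const c).tendsto 0
  filter_upwards [hmul.eventually (h y hy)] with t ht
  simpa only [mul_smul] using ht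

theorem HasSlopeOn.add {v' : E} {w' : F} (h : HasSlopeOn φ X v w) (h' : HasSlopeOn φ X v' w')
    (hX : Convex ℝ X) : HasSlopeOn φ X (v + v') (w + w') := by
  intro y hy
  filter_upwards [h y hy, h.smul 2 y hy, h'.smul 2 y hy] with t ht hdouble₁ hdouble₂
  -- `y + t • (v + v')` is the midpoint of `y + 2 t • v` and `y + 2 t • v'`.
  have hmem : y + t • v + t • v' ∈ X := by
    convert hX hdouble₁.1 hdouble₂.1 (show (0 : ℝ) ≤ 1 / 2 by norm_num)
      (show (0 : ℝ) ≤ 1 / 2 by norm_num) (by norm_num) using 1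
    module
  rw [smul_add, ← add_assoc]
  refine ⟨hmem, ?_⟩
  rw [h'.map_add_smul hX ht.1 hmem, ht.2, smul_add, add_assoc]

/-- The linear relation between directions and the slopes of `φ` on `X` along them. -/
def slopeRelation (hX : Convex ℝ X) (φ : E → F) : Submodule ℝ (E × F) where
  carrier := {p | HasSlopeOn φ X p.1 p.2}
  zero_mem' := .zero
  add_mem' h h' := h.add h' hX
  smul_mem' c _ h := h.smul c

end Slope

section ReachableSubspace

variable {R E F : Type*} [Semiring R] [AddCommMonoid E] [Module R E] [AddCommMonoid F] [Module R F]

/-- The reachable (Krylov) subspace of the linear control system `x⁺ = M x + B u`. -/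
def reachableSubspace (M : Module.End R E) (B : F →ₗ[R] E) : Submodule R E :=
  ⨆ k : ℕ, LinearMap.range ((M ^ k) ∘ₗ B)

theorem pow_apply_mem_reachableSubspace (M : Module.End R E) (B : F →ₗ[R] E) (k : ℕ) (v : F) :
    (M ^ k) (B v) ∈ reachableSubspace M B :=
  Submodule.mem_iSup_of_mem k ⟨v, rfl⟩

theorem range_le_reachableSubspace (M : Module.End R E) (B : F →ₗ[R] E) :
    LinearMap.range B ≤ reachableSubspace M B := by
  rintro _ ⟨v, rfl⟩
  exact pow_apply_mem_reachableSubspace M B 0 v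

theorem reachableSubspace_mem_invtSubmodule (M : Module.End R E) (B : F →ₗ[R] E) :
    reachableSubspace M B ∈ M.invtSubmodule := by
  rw [Module.End.mem_invtSubmodule, reachableSubspace, iSup_le_iff]
  intro k
  rintro _ ⟨v, rfl⟩
  rw [Submodule.mem_comap, LinearMap.comp_apply, ← Module.End.mul_apply, ← pow_succ']
  exact pow_apply_mem_reachableSubspace M B (k + 1) v

end ReachableSubspace

section CayleyHamilton

variable {K E F : Type*} [Field K] [AddCommGroup E] [Module K E] [FiniteDimensional K E]

theorem pow_apply_mem_of_forall_lt_finrank (M : Module.End K E) (b : E)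
    (W : Submodule K E) (h : ∀ k < Module.finrank K E, (M ^ k) b ∈ W) (k : ℕ) : (M ^ k) b ∈ W := by
  rcases subsingleton_or_nontrivial E with hE | hE
  · rw [Subsingleton.elim ((M ^ k) b) 0]
    exact W.zero_mem
  have hdeg : (Polynomial.X ^ k %ₘ M.charpoly).natDegree < Module.finrank K E := by
    rw [← M.charpoly_natDegree]
    refine Polynomial.natDegree_modByMonic_lt _ M.charpoly_monic fun hone => ?_
    exact Module.finrank_pos.ne' (by rw [← M.charpoly_natDegree, hone, Polynomial.natDegree_one])
  rw [LinearMap.pow_eq_aeval_mod_charpoly, Polynomial.aeval_eq_sum_range' hdeg,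
    LinearMap.sum_apply]
  exact W.sum_mem fun i hi => W.smul_mem _ (h i (Finset.mem_range.1 hi))

theorem reachableSubspace_le_of_forall_lt_finrank [AddCommGroup F] [Module K F]
    {M : Module.End K E} {B : F →ₗ[K] E} {W : Submodule K E}
    (h : ∀ k < Module.finrank K E, ∀ v, (M ^ k) (B v) ∈ W) : reachableSubspace M B ≤ W := by
  refine iSup_le fun k => ?_
  rintro _ ⟨v, rfl⟩
  exact pow_apply_mem_of_forall_lt_finrank M (B v) W (fun j hj => h j hj v) k

end CayleyHamilton

section ControlSystem

variable {ι : Type} {m : ℕ} {f : (ι → ℝ) → (Fin m → ℝ) → (ι → ℝ)}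
  {X : Set (ι → ℝ)} {U : Set (Fin m → ℝ)}

theorem iterDyn_mem (hf : ∀ x ∈ X, ∀ u ∈ U, f x u ∈ X) {x : ι → ℝ} (hx : x ∈ X) {N : ℕ}
    {u : Fin N → Fin m → ℝ} (hu : ∀ i, u i ∈ U) : iterDyn f N x u ∈ X := by
  induction N with
  | zero => exact hx
  | succ N ih => exact hf _ (ih fun i => hu _) _ (hu _)

theorem iterDyn_snoc (f : (ι → ℝ) → (Fin m → ℝ) → (ι → ℝ)) {N : ℕ} (x : ι → ℝ)
    (u : Fin N → Fin m → ℝ) (v : Fin m → ℝ) :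
    iterDyn f (N + 1) x (Fin.snoc u v) = f (iterDyn f N x u) v := by
  simp [iterDyn]

theorem iterDyn_cons (f : (ι → ℝ) → (Fin m → ℝ) → (ι → ℝ)) {N : ℕ} (x : ι → ℝ) (v : Fin m → ℝ)
    (u : Fin N → Fin m → ℝ) :
    iterDyn f (N + 1) x (Fin.cons v u) = iterDyn f N (f x v) u := by
  induction N with
  | zero => rfl
  | succ N ih =>
    rw [← Fin.snoc_init_self u, Fin.cons_snoc_eq_snoc_cons, iterDyn_snoc, iterDyn_snoc, ih]

theorem forall_snoc_mem {N : ℕ} {u : Fin N → Fin m → ℝ} {v : Fin m → ℝ} (hu : ∀ i, u i ∈ U)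
    (hv : v ∈ U) (i : Fin (N + 1)) : (Fin.snoc u v : Fin (N + 1) → Fin m → ℝ) i ∈ U := by
  induction i using Fin.lastCases with
  | last => simpa using hv
  | cast i => simpa using hu i

theorem forall_cons_mem {N : ℕ} {v : Fin m → ℝ} {u : Fin N → Fin m → ℝ} (hv : v ∈ U)
    (hu : ∀ i, u i ∈ U) (i : Fin (N + 1)) : (Fin.cons v u : Fin (N + 1) → Fin m → ℝ) i ∈ U :=
  Fin.cases hv hu i

theorem exists_iterDyn_eq (hsurj : ∀ y ∈ X, ∃ x ∈ X, ∃ u ∈ U, f x u = y) (N : ℕ) {y : ι → ℝ}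
    (hy : y ∈ X) : ∃ x ∈ X, ∃ u : Fin N → Fin m → ℝ, (∀ i, u i ∈ U) ∧ iterDyn f N x u = y := by
  induction N generalizing y with
  | zero => exact ⟨y, hy, Fin.elim0, fun i => i.elim0, rfl⟩
  | succ N ih =>
    obtain ⟨z, hz, v, hv, rfl⟩ := hsurj y hy
    obtain ⟨x, hx, u, hu, rfl⟩ := ih hz
    exact ⟨x, hx, Fin.snoc u v, forall_snoc_mem hu hv, iterDyn_snoc f x u v⟩

theorem iterDyn_add_smul (hX : Convex ℝ X) (hf : ∀ x ∈ X, ∀ u ∈ U, f x u ∈ X)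
    {φ : (ι → ℝ) → (ι → ℝ)} {β : (Fin m → ℝ) → (ι → ℝ)} (hφ : ∀ x ∈ X, ∀ u ∈ U, f x u = φ x + β u)
    {M : Module.End ℝ (ι → ℝ)} {b : ι → ℝ} {k : ℕ}
    (hM : ∀ j < k, HasSlopeOn φ X ((M ^ j) b) (M ((M ^ j) b))) {x : ι → ℝ} (hx : x ∈ X) {t : ℝ}
    (hxt : x + t • b ∈ X) {u : Fin k → Fin m → ℝ} (hu : ∀ i, u i ∈ U) :
    iterDyn f k (x + t • b) u = iterDyn f k x u + t • (M ^ k) b := by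
  induction k with
  | zero => simp [iterDyn]
  | succ k ih =>
    have hinit := ih (fun j hj => hM j (hj.trans k.lt_succ_self)) (fun i => hu i.castSucc)
    have hy := iterDyn_mem hf hx fun i => hu i.castSucc
    have hyt := iterDyn_mem hf hxt fun i => hu i.castSucc
    rw [iterDyn, iterDyn, hφ _ hyt _ (hu _), hφ _ hy _ (hu _)]
    rw [hinit] at hyt ⊢
    rw [(hM k k.lt_succ_self).map_add_smul hX hy hyt, pow_succ', Module.End.mul_apply]
    abel

/-- The coordinate-free form of a CAP structure: the inputs enter a subspace `V` (the directions
of `x̃₁`) that is invariant under the linear part `M`, and the nonlinearity `ψ` sees the state only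
modulo `V` (that is, through `x̃₂`). -/
def HasInvariantSubspaceForm (f : (ι → ℝ) → (Fin m → ℝ) → (ι → ℝ))
    (X : Set (ι → ℝ)) (U : Set (Fin m → ℝ)) : Prop :=
  ∃ (V : Submodule ℝ (ι → ℝ)) (ψ : (ι → ℝ) ⧸ V → (ι → ℝ)) (M : Module.End ℝ (ι → ℝ))
    (B : (Fin m → ℝ) →ₗ[ℝ] (ι → ℝ)), LinearMap.range B ≤ V ∧ V ∈ M.invtSubmodule ∧
      ∀ x ∈ X, ∀ u ∈ U, f x u = ψ (V.mkQ x) + M x + B u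

theorem hasInvariantSubspaceForm_of_hasSlopeOn (hX : Convex ℝ X)
    {φ : (ι → ℝ) → (ι → ℝ)} {B : (Fin m → ℝ) →ₗ[ℝ] (ι → ℝ)}
    (hφ : ∀ x ∈ X, ∀ u ∈ U, f x u = φ x + B u) {M : Module.End ℝ (ι → ℝ)}
    {V : Submodule ℝ (ι → ℝ)} (hB : LinearMap.range B ≤ V) (hM : V ∈ M.invtSubmodule)
    (hV : ∀ v ∈ V, HasSlopeOn φ X v (M v)) : HasInvariantSubspaceForm f X U := by
  have hfactors : FactorsThrough (fun x : X => φ x - M x) (fun x : X => V.mkQ x) := by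
    rintro ⟨x, hx⟩ ⟨y, hy⟩ hxy
    have hmem : x - y ∈ V := (Submodule.Quotient.eq V).1 hxy
    have hstep := (hV _ hmem).map_add_smul hX hy (t := 1) (by simpa using hx)
    simp only [one_smul, add_sub_cancel, map_sub] at hstep
    simp only [hstep]
    abel
  refine ⟨V, extend (fun x : X => V.mkQ x) (fun x => φ x - M x) 0, M, B, hB, hM,
    fun x hx u hu => ?_⟩
  rw [hφ x hx u hu, hfactors.extend_apply 0 ⟨x, hx⟩, sub_add_cancel]

variable [Fintype ι]

theorem hasNStepLinearPredictor_iff_linearMap {N : ℕ} :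
    HasNStepLinearPredictor f X U N ↔
      ∃ (Φ : (ι → ℝ) → (ι → ℝ)) (A : (Fin N → Fin m → ℝ) →ₗ[ℝ] (ι → ℝ)),
        ∀ x ∈ X, ∀ u : Fin N → (Fin m → ℝ), (∀ i, u i ∈ U) → iterDyn f N x u = Φ x + A u := by
  constructor
  · rintro ⟨Φ, B, h⟩
    exact ⟨Φ, B.mulVecLin ∘ₗ (LinearEquiv.curry ℝ ℝ (Fin N) (Fin m)).symm.toLinearMap, h⟩
  · rintro ⟨Φ, A, h⟩
    refine ⟨Φ, LinearMap.toMatrix' (A ∘ₗ (LinearEquiv.curry ℝ ℝ (Fin N) (Fin m)).toLinearMap),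
      fun x hx u hu => ?_⟩
    rw [h x hx u hu, LinearMap.toMatrix'_mulVec]
    rfl

theorem HasNStepLinearPredictor.exists_eq_add (h : HasNStepLinearPredictor f X U 1) :
    ∃ (φ : (ι → ℝ) → (ι → ℝ)) (B : (Fin m → ℝ) →ₗ[ℝ] (ι → ℝ)),
      ∀ x ∈ X, ∀ u ∈ U, f x u = φ x + B u := by
  obtain ⟨φ, A, hA⟩ := hasNStepLinearPredictor_iff_linearMap.1 h
  exact ⟨φ, A ∘ₗ LinearMap.pi fun _ => LinearMap.id, fun x hx u hu =>
    hA x hx (fun _ => u) fun _ => hu⟩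

theorem HasNStepLinearPredictor.exists_iterDyn_eq_add {N : ℕ}
    (h : HasNStepLinearPredictor f X U (N + 1)) :
    ∃ A : (Fin m → ℝ) →ₗ[ℝ] (ι → ℝ), ∀ x ∈ X, ∀ v ∈ U, ∀ v' ∈ U, ∀ u : Fin N → Fin m → ℝ,
      (∀ i, u i ∈ U) → iterDyn f N (f x v') u = iterDyn f N (f x v) u + A (v' - v) := by
  obtain ⟨Φ, A, hA⟩ := hasNStepLinearPredictor_iff_linearMap.1 h
  refine ⟨A ∘ₗ LinearMap.single ℝ (fun _ => Fin m → ℝ) 0, fun x hx v hv v' hv' u hu => ?_⟩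
  have hcons : (Fin.cons v' u : Fin (N + 1) → Fin m → ℝ) =
      Fin.cons v u + Pi.single 0 (v' - v) := by
    ext i : 1
    cases i using Fin.cases <;> simp
  rw [← iterDyn_cons, ← iterDyn_cons, hA x hx _ (forall_cons_mem hv' hu),
    hA x hx _ (forall_cons_mem hv hu), hcons, map_add, add_assoc]
  rfl

theorem HasNStepLinearPredictor.exists_hasSlopeOn_pow_apply (hX : Convex ℝ X) (hU : IsOpen U)
    (hf : ∀ x ∈ X, ∀ u ∈ U, f x u ∈ X) (hsurj : ∀ y ∈ X, ∃ x ∈ X, ∃ u ∈ U, f x u = y)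
    {φ : (ι → ℝ) → (ι → ℝ)} {B : (Fin m → ℝ) →ₗ[ℝ] (ι → ℝ)}
    (hφ : ∀ x ∈ X, ∀ u ∈ U, f x u = φ x + B u) {M : Module.End ℝ (ι → ℝ)} {v : Fin m → ℝ} {k : ℕ}
    (hM : ∀ j < k, HasSlopeOn φ X ((M ^ j) (B v)) (M ((M ^ j) (B v))))
    (hpred : HasNStepLinearPredictor f X U (k + 2)) :
    ∃ w, HasSlopeOn φ X ((M ^ k) (B v)) w := by
  obtain ⟨A, hA⟩ := hpred.exists_iterDyn_eq_add
  refine ⟨A v, fun y hy => ?_⟩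
  obtain ⟨z, hz, s, hs, rfl⟩ := exists_iterDyn_eq hsurj k hy
  obtain ⟨x, hx, u, hu, rfl⟩ := hsurj z hz
  have hUt : ∀ᶠ t : ℝ in 𝓝 0, u + t • v ∈ U :=
    (show Continuous fun t : ℝ => u + t • v by fun_prop).continuousAt.eventually_mem
      (hU.mem_nhds (by simpa using hu))
  filter_upwards [hUt] with t ht
  have hfirst : f x (u + t • v) = f x u + t • B v := by
    rw [hφ x hx _ ht, hφ x hx u hu, map_add, map_smul, add_assoc]
  have hzt : f x (u + t • v) ∈ X := hf x hx _ ht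
  have hreach : iterDyn f k (f x (u + t • v)) s =
      iterDyn f k (f x u) s + t • (M ^ k) (B v) := by
    rw [hfirst] at hzt ⊢
    exact iterDyn_add_smul hX hf hφ hM hz hzt hs
  have hyt := iterDyn_mem hf hzt hs
  have hgain := hA x hx u hu _ ht (Fin.snoc s u) (forall_snoc_mem hs hu)
  rw [iterDyn_snoc, iterDyn_snoc, hφ _ hyt u hu, hφ _ hy u hu, add_sub_cancel_left, map_smul,
    add_right_comm, add_left_inj] at hgain
  rw [hreach] at hyt hgain
  exact ⟨hyt, hgain⟩

theorem exists_forall_mem_reachableSubspace_hasSlopeOn (hX : Convex ℝ X) (hU : IsOpen U)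
    (hf : ∀ x ∈ X, ∀ u ∈ U, f x u ∈ X) (hsurj : ∀ y ∈ X, ∃ x ∈ X, ∃ u ∈ U, f x u = y)
    {φ : (ι → ℝ) → (ι → ℝ)} {B : (Fin m → ℝ) →ₗ[ℝ] (ι → ℝ)}
    (hφ : ∀ x ∈ X, ∀ u ∈ U, f x u = φ x + B u)
    (hpred : ∀ k < Fintype.card ι, HasNStepLinearPredictor f X U (k + 2)) :
    ∃ M : Module.End ℝ (ι → ℝ), ∀ v ∈ reachableSubspace M B, HasSlopeOn φ X v (M v) := by
  obtain ⟨M, hM⟩ := exists_linearMap_forall_mem_graph (slopeRelation hX φ)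
  let W : Submodule ℝ (ι → ℝ) := (slopeRelation hX φ).comap (LinearMap.id.prod M)
  suffices h : reachableSubspace M B ≤ W from ⟨M, h⟩
  refine reachableSubspace_le_of_forall_lt_finrank fun k hk v => ?_
  induction k using Nat.strong_induction_on with
  | _ k ih =>
    obtain ⟨w, hw⟩ := (hpred k (by simpa using hk)).exists_hasSlopeOn_pow_apply hX hU hf hsurj hφ
      fun j hj => ih j hj (hj.trans hk)
    exact hM (_, w) hw

theorem HasInvariantSubspaceForm.hasNStepLinearPredictor (h : HasInvariantSubspaceForm f X U)
    (hf : ∀ x ∈ X, ∀ u ∈ U, f x u ∈ X) (N : ℕ) : HasNStepLinearPredictor f X U N := by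
  obtain ⟨V, ψ, M, B, hB, hM, hfx⟩ := h
  suffices hN : ∃ (Φ : (ι → ℝ) → (ι → ℝ)) (A : (Fin N → Fin m → ℝ) →ₗ[ℝ] (ι → ℝ)),
      (∀ u, A u ∈ V) ∧ ∀ x ∈ X, ∀ u : Fin N → Fin m → ℝ, (∀ i, u i ∈ U) →
        iterDyn f N x u = Φ x + A u by
    obtain ⟨Φ, A, -, hA⟩ := hN
    exact hasNStepLinearPredictor_iff_linearMap.2 ⟨Φ, A, hA⟩
  induction N with
  | zero => exact ⟨id, 0, fun _ => V.zero_mem, fun x _ u _ => by simp [iterDyn]⟩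
  | succ N ih =>
    obtain ⟨Φ, A, hAV, hA⟩ := ih
    let A' : (Fin (N + 1) → Fin m → ℝ) →ₗ[ℝ] (ι → ℝ) :=
      M ∘ₗ A ∘ₗ LinearMap.funLeft ℝ (Fin m → ℝ) Fin.castSucc + B ∘ₗ LinearMap.proj (Fin.last N)
    have hA' (u : Fin (N + 1) → Fin m → ℝ) :
        A' u = M (A fun i => u i.castSucc) + B (u (Fin.last N)) := rfl
    refine ⟨fun x => ψ (V.mkQ (Φ x)) + M (Φ x), A', fun u => ?_, fun x hx u hu => ?_⟩
    · exact V.add_mem (hM (hAV _)) (hB ⟨_, rfl⟩)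
    · have hmkQ : V.mkQ (A fun i => u i.castSucc) = 0 := by simpa using hAV _
      rw [iterDyn, hfx _ (iterDyn_mem hf hx fun i => hu _) _ (hu _),
        hA x hx _ fun i => hu _, map_add, map_add, hmkQ, add_zero, hA']
      simp only [add_assoc]

variable [DecidableEq ι]

theorem hasCAP_iff_linearEquiv :
    HasCAP f X U ↔ ∃ (n₁ n₂ : ℕ) (e : (ι → ℝ) ≃ₗ[ℝ] (Fin n₁ → ℝ) × (Fin n₂ → ℝ))
      (g : (Fin n₂ → ℝ) → (Fin n₁ → ℝ)) (h : (Fin n₂ → ℝ) → (Fin n₂ → ℝ))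
      (C : Module.End ℝ (Fin n₁ → ℝ)) (D : (Fin m → ℝ) →ₗ[ℝ] (Fin n₁ → ℝ)),
      ∀ x ∈ X, ∀ u ∈ U, e (f x u) = (g (e x).2 + C (e x).1 + D u, h (e x).2) := by
  constructor
  · rintro ⟨n₁, n₂, T, S, hTS, hST, g, h, C, D, hfT⟩
    let e := toLin'OfInv hST hTS ≪≫ₗ LinearEquiv.sumArrowLequivProdArrow (Fin n₁) (Fin n₂) ℝ ℝ
    refine ⟨n₁, n₂, e, g, h, C.mulVecLin, D.mulVecLin, fun x hx u hu => ?_⟩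
    exact congrArg (LinearEquiv.sumArrowLequivProdArrow (Fin n₁) (Fin n₂) ℝ ℝ) (hfT x hx u hu)
  · rintro ⟨n₁, n₂, e, g, h, C, D, hfe⟩
    let T := e ≪≫ₗ (LinearEquiv.sumArrowLequivProdArrow (Fin n₁) (Fin n₂) ℝ ℝ).symm
    refine ⟨n₁, n₂, LinearMap.toMatrix' T.toLinearMap, LinearMap.toMatrix' T.symm.toLinearMap,
      ?_, ?_, g, h, LinearMap.toMatrix' C, LinearMap.toMatrix' D, fun x hx u hu => ?_⟩
    · rw [← LinearMap.toMatrix'_comp, LinearEquiv.comp_symm, LinearMap.toMatrix'_id]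
    · rw [← LinearMap.toMatrix'_comp, LinearEquiv.symm_comp, LinearMap.toMatrix'_id]
    · simp only [LinearMap.toMatrix'_mulVec]
      exact congrArg (LinearEquiv.sumArrowLequivProdArrow (Fin n₁) (Fin n₂) ℝ ℝ).symm
        (hfe x hx u hu)

theorem HasCAP.hasInvariantSubspaceForm (hcap : HasCAP f X U) :
    HasInvariantSubspaceForm f X U := by
  obtain ⟨n₁, n₂, e, g, h, C, D, hfe⟩ := hasCAP_iff_linearEquiv.1 hcap
  let P₁ := LinearMap.fst ℝ (Fin n₁ → ℝ) (Fin n₂ → ℝ) ∘ₗ e.toLinearMap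
  let P₂ := LinearMap.snd ℝ (Fin n₁ → ℝ) (Fin n₂ → ℝ) ∘ₗ e.toLinearMap
  let J₁ := e.symm.toLinearMap ∘ₗ LinearMap.inl ℝ (Fin n₁ → ℝ) (Fin n₂ → ℝ)
  let V := LinearMap.ker P₂
  have hJ₁ (z : Fin n₁ → ℝ) : J₁ z ∈ V := by simp [V, J₁, P₂]
  let P₂' := V.liftQ P₂ le_rfl
  refine ⟨V, fun q => e.symm (g (P₂' q), h (P₂' q)), J₁ ∘ₗ C ∘ₗ P₁, J₁ ∘ₗ D, ?_,
    fun x _ => hJ₁ _, fun x hx u hu => e.injective ?_⟩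
  · rintro _ ⟨u, rfl⟩
    exact hJ₁ _
  · rw [hfe x hx u hu]
    simp [V, J₁, P₁, P₂, P₂']

theorem HasInvariantSubspaceForm.hasCAP (hform : HasInvariantSubspaceForm f X U) :
    HasCAP f X U := by
  obtain ⟨V, ψ, M, B, hB, hM, hfx⟩ := hform
  obtain ⟨n₁, n₂, e, he⟩ := exists_linearEquiv_prod_mem_iff V
  let P₁ := LinearMap.fst ℝ (Fin n₁ → ℝ) (Fin n₂ → ℝ) ∘ₗ e.toLinearMap
  let J₁ := e.symm.toLinearMap ∘ₗ LinearMap.inl ℝ (Fin n₁ → ℝ) (Fin n₂ → ℝ)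
  let J₂ := e.symm.toLinearMap ∘ₗ LinearMap.inr ℝ (Fin n₁ → ℝ) (Fin n₂ → ℝ)
  have hJ₁ (z : Fin n₁ → ℝ) : J₁ z ∈ V := by simp [J₁, he]
  have hsplit (x : ι → ℝ) : J₁ (e x).1 + J₂ (e x).2 = x := e.injective (by simp [J₁, J₂])
  have hmkQ (x : ι → ℝ) : V.mkQ x = V.mkQ (J₂ (e x).2) := by
    refine (Submodule.Quotient.eq V).2 ?_
    rw [← eq_sub_of_add_eq (hsplit x)]
    exact hJ₁ _
  let drift (z : Fin n₂ → ℝ) : ι → ℝ := ψ (V.mkQ (J₂ z)) + M (J₂ z)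
  refine hasCAP_iff_linearEquiv.2 ⟨n₁, n₂, e, fun z => (e (drift z)).1, fun z => (e (drift z)).2,
    P₁ ∘ₗ M ∘ₗ J₁, P₁ ∘ₗ B, fun x hx u hu => ?_⟩
  have hdrift : f x u = drift (e x).2 + M (J₁ (e x).1) + B u := by
    calc f x u = ψ (V.mkQ (J₂ (e x).2)) + M (J₁ (e x).1 + J₂ (e x).2) + B u := by
          rw [← hmkQ, hsplit, hfx x hx u hu]
      _ = drift (e x).2 + M (J₁ (e x).1) + B u := by
          rw [map_add]
          simp only [drift]
          abel
  have hM₂ : (e (M (J₁ (e x).1))).2 = 0 := (he _).1 (hM (hJ₁ _))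
  have hB₂ : (e (B u)).2 = 0 := (he _).1 (hB ⟨u, rfl⟩)
  rw [hdrift, map_add, map_add]
  refine Prod.ext rfl ?_
  simp [hM₂, hB₂]

end ControlSystem

theorem nStep_linear_predictors_iff_CAP_general {ι : Type} [Fintype ι] [DecidableEq ι] {m : ℕ}
    (f : (ι → ℝ) → (Fin m → ℝ) → (ι → ℝ)) (X : Set (ι → ℝ)) (U : Set (Fin m → ℝ))
    (hXconv : Convex ℝ X) (hUopen : IsOpen U) (hf : ∀ x ∈ X, ∀ u ∈ U, f x u ∈ X)
    (hsurj : ∀ y ∈ X, ∃ x ∈ X, ∃ u ∈ U, f x u = y) :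
    (∀ N : ℕ, 1 ≤ N → N ≤ Fintype.card ι + 1 → HasNStepLinearPredictor f X U N) ↔
      HasCAP f X U := by
  refine ⟨fun hpred => HasInvariantSubspaceForm.hasCAP ?_,
    fun hcap N _ _ => hcap.hasInvariantSubspaceForm.hasNStepLinearPredictor hf N⟩
  obtain ⟨φ, B, hφ⟩ := (hpred 1 le_rfl (Nat.le_add_left 1 _)).exists_eq_add
  obtain ⟨M, hM⟩ := exists_forall_mem_reachableSubspace_hasSlopeOn hXconv hUopen hf hsurj hφ
    fun k hk => hpred (k + 2) (Nat.le_add_left 1 _) (Nat.succ_le_succ hk)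
  exact hasInvariantSubspaceForm_of_hasSlopeOn hXconv hφ (range_le_reachableSubspace M B)
    (reachableSubspace_mem_invtSubmodule M B) hM

/-- **Equivalence of `(n+1)`-step linear predictability and the CAP structure.**
For a system `x⁺ = f(x,u)` with `𝒳 ⊆ ℝ^n` open and convex, `𝒰` open, and `f : 𝒳 × 𝒰 → 𝒳`
surjective, the system admits `N`-step linear predictors for all `N ∈ {1, …, n+1}` if and
only if it admits a control-affine preserved (CAP) structure. -/
theorem nStep_linear_predictors_iff_CAP
    {n m : ℕ} (f : (Fin n → ℝ) → (Fin m → ℝ) → (Fin n → ℝ))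
    (X : Set (Fin n → ℝ)) (U : Set (Fin m → ℝ))
    (hXopen : IsOpen X) (hXconv : Convex ℝ X) (hUopen : IsOpen U)
    (hf : ∀ x ∈ X, ∀ u ∈ U, f x u ∈ X)
    (hsurj : ∀ y ∈ X, ∃ x ∈ X, ∃ u ∈ U, f x u = y) :
    (∀ N : ℕ, 1 ≤ N → N ≤ n + 1 → HasNStepLinearPredictor f X U N) ↔ HasCAP f X U := by
  simpa only [Fintype.card_fin] using
    nStep_linear_predictors_iff_CAP_general f X U hXconv hUopen hf hsurj
end
end

section
/- (Two-layer affine recursion with full-row-rank coefficient.) Let 𝒳 ⊆ ℝ^n be open and convex, 𝒰 ⊆ ℝ^m be open, Φ : 𝒳 → ℝ^n be an arbitrary function, and B ∈ ℝ^{n×m} have full row rank. Suppose (A1) Φ(x) + Bu ∈ 𝒳 for all x ∈ 𝒳, u ∈ 𝒰, and the map (x,u) ↦ Φ(x) + Bu from 𝒳 × 𝒰 to 𝒳 is surjective; and (A2) there exist a function Φ̃ : 𝒳 → ℝ^n and a matrix B̃ ∈ ℝ^{n×m} such that Φ(Φ(x) + Bu) = Φ̃(x) + B̃u for all x ∈ 𝒳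 and u ∈ 𝒰. Then Φ is affine on 𝒳: there exist C ∈ ℝ^{n×n} and v ∈ ℝ^n such that Φ(x) = Cx + v for all x ∈ 𝒳. -/
open Matrix

noncomputable section

/-!
Let `Ψ` be the second layer, with `Ψ (Φ x + B u) = Φ' x + B' u`. Near `y = Φ x + B u` every point is
`z = Φ x + B w` with the same `x` and some `w ∈ U`, because `B` is an open map. Hence
`Ψ z - Ψ y = B' (w - u)` while `z - y = B (w - u)`. The case `z = y` says that `B'` vanishes on the
small vectors of `ker B`, hence on `ker B`, so `B' = L ∘ B` for some linear `L`. Then `Ψ - L` is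
locally constant on `X`, and therefore constant since `X` is preconnected.
-/

section

open scoped Topology

variable {𝕜 V E F : Type*} [Field 𝕜] [AddCommGroup V] [Module 𝕜 V] [AddCommGroup E] [Module 𝕜 E]
  [AddCommGroup F] [Module 𝕜 F]

theorem exists_comp_eq_of_ker_le_ker {f : V →ₗ[𝕜] E} {g : V →ₗ[𝕜] F}
    (h : LinearMap.ker f ≤ LinearMap.ker g) : ∃ L : E →ₗ[𝕜] F, L ∘ₗ f = g := by
  obtain ⟨L, hL⟩ :=
    ((LinearMap.ker f).liftQ g h ∘ₗ f.quotKerEquivRange.symm.toLinearMap).exists_extend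
  refine ⟨L, LinearMap.ext fun v ↦ ?_⟩
  simpa [LinearMap.quotKerEquivRange_symm_apply_image] using
    LinearMap.congr_fun hL ⟨f v, LinearMap.mem_range_self f v⟩

theorem mulVec_surjective_of_rank_eq_card {m n : Type*} [Fintype m] [Fintype n]
    {A : Matrix m n 𝕜} (hA : A.rank = Fintype.card m) : Function.Surjective A.mulVec := by
  have hrange : LinearMap.range A.mulVecLin = ⊤ :=
    Submodule.eq_top_of_finrank_eq (by rw [Module.finrank_fintype_fun_eq_card, ← hA, Matrix.rank])
  exact LinearMap.range_eq_top.mp hrange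

variable [TopologicalSpace V]

theorem ker_le_ker_of_eqOn_fiber [TopologicalSpace 𝕜] [(𝓝[≠] (0 : 𝕜)).NeBot]
    [ContinuousAdd V] [ContinuousSMul 𝕜 V]
    {f : V →ₗ[𝕜] E} {g : V →ₗ[𝕜] F} {U : Set V} (hU : IsOpen U) {u₀ : V} (hu₀ : u₀ ∈ U)
    (h : ∀ u ∈ U, f u = f u₀ → g u = g u₀) : LinearMap.ker f ≤ LinearMap.ker g := by
  intro w hw
  have hcont : Continuous fun t : 𝕜 ↦ u₀ + t • w := by fun_prop
  have hnear : ∀ᶠ t : 𝕜 in 𝓝[≠] 0, u₀ + t • w ∈ U :=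
    (hcont.continuousAt.eventually_mem (hU.mem_nhds (by simpa using hu₀))).filter_mono
      nhdsWithin_le_nhds
  obtain ⟨t, htU, ht⟩ := (hnear.and self_mem_nhdsWithin).exists
  have hgt : g (u₀ + t • w) = g u₀ := h _ htU (by simp [LinearMap.mem_ker.mp hw])
  have hsmul : t • g w = 0 := by simpa using hgt
  exact (smul_eq_zero.mp hsmul).resolve_left ht

variable [TopologicalSpace E] [ContinuousAdd E]

theorem eventually_sub_eq_of_apply_add_eq
    {B : V →ₗ[𝕜] E} {L : E →ₗ[𝕜] F} (hB : IsOpenMap B)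
    {X : Set E} {U : Set V} (hU : IsOpen U) {Ψ : E → F} {a : E} {b : F}
    (hΨ : ∀ u ∈ U, a + B u ∈ X → Ψ (a + B u) = b + L (B u))
    {u₀ : V} (hu₀ : u₀ ∈ U) (hX : a + B u₀ ∈ X) :
    ∀ᶠ z in 𝓝[X] (a + B u₀), Ψ (a + B u₀) - L (a + B u₀) = Ψ z - L z := by
  have hopen : IsOpenMap fun u ↦ a + B u := (isOpenMap_add_left a).comp hB
  have himage : (fun u ↦ a + B u) '' U ∈ 𝓝 (a + B u₀) :=
    hopen.image_mem_nhds (hU.mem_nhds hu₀)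
  have hdiff : ∀ u ∈ U, a + B u ∈ X → Ψ (a + B u) - L (a + B u) = b - L a := by
    intro u hu huX
    rw [hΨ u hu huX, map_add, add_sub_add_right_eq_sub]
  filter_upwards [nhdsWithin_le_nhds himage, self_mem_nhdsWithin] with z hz hzX
  obtain ⟨u, hu, rfl⟩ := hz
  rw [hdiff u hu hzX, hdiff u₀ hu₀ hX]

theorem two_layer_affine_recursion_full_row_rank_general {ι : Type*}
    [TopologicalSpace 𝕜] [(𝓝[≠] (0 : 𝕜)).NeBot] [ContinuousAdd V] [ContinuousSMul 𝕜 V]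
    {S : Set ι} {X : Set E} {U : Set V} (hX : IsPreconnected X) (hU : IsOpen U)
    (Φ : ι → E) (Ψ : E → F) {B : V →ₗ[𝕜] E} (hB : IsOpenMap B)
    (hsurj : ∀ y ∈ X, ∃ x ∈ S, ∃ u ∈ U, Φ x + B u = y)
    (Φ' : ι → F) (B' : V →ₗ[𝕜] F)
    (hrec : ∀ x ∈ S, ∀ u ∈ U, Φ x + B u ∈ X → Ψ (Φ x + B u) = Φ' x + B' u) :
    ∃ (L : E →ₗ[𝕜] F) (v : F), ∀ x ∈ X, Ψ x = L x + v := by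
  rcases X.eq_empty_or_nonempty with rfl | ⟨y₀, hy₀⟩
  · exact ⟨0, 0, by simp⟩
  have hker : LinearMap.ker B ≤ LinearMap.ker B' := by
    obtain ⟨x₀, hx₀, u₀, hu₀, rfl⟩ := hsurj y₀ hy₀
    refine ker_le_ker_of_eqOn_fiber hU hu₀ fun u hu hBu ↦ add_left_cancel (a := Φ' x₀) ?_
    rw [← hrec x₀ hx₀ u hu (by rwa [hBu]), hBu, hrec x₀ hx₀ u₀ hu₀ hy₀]
  obtain ⟨L, rfl⟩ := exists_comp_eq_of_ker_le_ker hker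
  have hlocal : ∀ y ∈ X, ∀ᶠ z in 𝓝[X] y, Ψ y - L y = Ψ z - L z := by
    intro y hy
    obtain ⟨x, hx, u, hu, rfl⟩ := hsurj y hy
    exact eventually_sub_eq_of_apply_add_eq hB hU (hrec x hx) hu hy
  refine ⟨L, Ψ y₀ - L y₀, fun x hx ↦ ?_⟩
  have hconst : Ψ x - L x = Ψ y₀ - L y₀ :=
    hX.induction₂ (fun y z ↦ Ψ y - L y = Ψ z - L z) hlocal
      (fun _ _ _ _ _ _ ↦ Eq.trans) (fun _ _ _ _ ↦ Eq.symm) hx hy₀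
  rw [← hconst, add_sub_cancel]

end

/-- **Two-layer affine recursion with full-row-rank coefficient.**
Let `𝒳 ⊆ ℝ^n` be open and convex, `𝒰 ⊆ ℝ^m` open, `Φ : 𝒳 → ℝ^n` arbitrary, and
`B ∈ ℝ^{n×m}` of full row rank.  If (A1) `(x,u) ↦ Φ(x) + Bu` maps `𝒳 × 𝒰` into `𝒳` and is
surjective onto `𝒳`, and (A2) `Φ(Φ(x) + Bu) = Φ̃(x) + B̃u` on `𝒳 × 𝒰` for some function `Φ̃`
and matrix `B̃`, then `Φ` is affine on `𝒳`: `Φ(x) = Cx + v` for all `x ∈ 𝒳`. -/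
theorem two_layer_affine_recursion_full_row_rank
    {n m : ℕ} (X : Set (Fin n → ℝ)) (U : Set (Fin m → ℝ))
    (hXopen : IsOpen X) (hXconv : Convex ℝ X) (hUopen : IsOpen U)
    (Φ : (Fin n → ℝ) → (Fin n → ℝ)) (B : Matrix (Fin n) (Fin m) ℝ)
    (hB : B.rank = n)
    (hmem : ∀ x ∈ X, ∀ u ∈ U, Φ x + B.mulVec u ∈ X)
    (hsurj : ∀ y ∈ X, ∃ x ∈ X, ∃ u ∈ U, Φ x + B.mulVec u = y)
    (Φt : (Fin n → ℝ) → (Fin n → ℝ)) (Bt : Matrix (Fin n) (Fin m) ℝ)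
    (hrec : ∀ x ∈ X, ∀ u ∈ U, Φ (Φ x + B.mulVec u) = Φt x + Bt.mulVec u) :
    ∃ (C : Matrix (Fin n) (Fin n) ℝ) (v : Fin n → ℝ),
      ∀ x ∈ X, Φ x = C.mulVec x + v := by
  have hBopen : IsOpenMap B.mulVecLin := B.mulVecLin.isOpenMap_of_finiteDimensional
    (mulVec_surjective_of_rank_eq_card (hB.trans (Fintype.card_fin n).symm))
  obtain ⟨L, v, hL⟩ := two_layer_affine_recursion_full_row_rank_general hXconv.isPreconnected
    hUopen Φ Φ hBopen hsurj Φt Bt.mulVecLin fun x hx u hu _ ↦ hrec x hx u hu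
  exact ⟨LinearMap.toMatrix' L, v, by simpa only [LinearMap.toMatrix'_mulVec] using hL⟩
end
end

section
/- (Two-layer affine recursion with rank-deficient coefficient.) Let 𝒳 ⊆ ℝ^n be open and convex, 𝒰 ⊆ ℝ^m be open, and write x = col(x₁, x₂) with x₁ ∈ ℝ^{n₁}, x₂ ∈ ℝ^{n−n₁}. Let Φ = col(Φ₁, Φ₂) : 𝒳 → ℝ^n and B = col(B₁, 0) ∈ ℝ^{n×m}, where B₁ ∈ ℝ^{n₁×m} has full row rank. Suppose (A1) Φ(x) + Bu ∈ 𝒳 for all x ∈ 𝒳, u ∈ 𝒰, and the map (x,u) ↦ Φ(x) + Bu from 𝒳 × 𝒰 to 𝒳 is surjective; and (A2) there exist a function Φ̃ : 𝒳 → ℝ^n and a matrix B̃ ∈ ℝ^{n×m} such that Φ(Φ(x) + Bu) = Φ̃(x) + B̃u for all x ∈ 𝒳 and u ∈ 𝒰. Then there exist constant matrices C₁ ∈ ℝ^{n₁×n₁} and C₂ ∈ ℝ^{(n−n₁)×n₁}, and functions g₁ : proj_{x₂}(𝒳) → ℝ^{n₁} and g₂ : proj_{x₂}(𝒳) → ℝ^{n−n₁},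 such that Φ₁(x₁, x₂) = C₁x₁ + g₁(x₂) and Φ₂(x₁, x₂) = C₂x₁ + g₂(x₂) for all col(x₁, x₂) ∈ 𝒳. -/
open Matrix

noncomputable section

/-!
Fix `x` and let the input vary. Since `B₁` has a right inverse `R`, the first block
`Φ₁ x + B₁ u` can be steered to any nearby point `a` while the second block stays at `Φ₂ x`, and the
recursion then says that `Φ` changes by `Bt R (a - (Φ₁ x + B₁ u))`. Every point of `X` is reached by
the dynamics, so on each slice `x₂ = c` of `X` the map `x₁ ↦ Φ (x₁, c) - Bt R x₁` is locally
constant, hence constant because the slice is connected; its value is `g c`.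
-/

open Topology

theorem exists_forall_eq_of_isPreconnected {α β : Type*} [TopologicalSpace α] [Nonempty β]
    {s : Set α} (hs : IsPreconnected s) {f : α → β}
    (hf : ∀ a ∈ s, ∀ᶠ b in 𝓝[s] a, f b = f a) : ∃ c, ∀ a ∈ s, f a = c := by
  rcases s.eq_empty_or_nonempty with rfl | ⟨a₀, ha₀⟩
  · exact ⟨Classical.arbitrary β, fun _ ha => ha.elim⟩
  · refine ⟨f a₀, fun a ha => ?_⟩
    exact hs.induction₂ (fun a b => f b = f a) hf (fun _ _ _ _ _ _ hab hbc => hbc.trans hab)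
      (fun _ _ _ _ hab => hab.symm) ha₀ ha

theorem convex_setOf_sumElim_mem {𝕜 E ι κ : Type*} [Semiring 𝕜] [PartialOrder 𝕜]
    [AddCommMonoid E] [Module 𝕜 E] {X : Set (ι ⊕ κ → E)} (hX : Convex 𝕜 X) (c : κ → E) :
    Convex 𝕜 {a : ι → E | Sum.elim a c ∈ X} := by
  intro a ha b hb s t hs ht hst
  have hcombo : s • Sum.elim a c + t • Sum.elim b c = Sum.elim (s • a + t • b) c := by
    ext (i | j)
    · rfl
    · exact Convex.combo_self hst (c j)
  rw [Set.mem_ofPred_eq, ← hcombo]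
  exact hX ha hb hs ht hst

theorem mulVec_surjective_of_rank_eq_card_s5 {K ι μ : Type*} [Field K] [Fintype ι] [Fintype μ]
    {B : Matrix ι μ K} (hB : B.rank = Fintype.card ι) : Function.Surjective B.mulVec := by
  have hrange : LinearMap.range B.mulVecLin = ⊤ :=
    Submodule.eq_top_of_finrank_eq (hB.trans (Module.finrank_fintype_fun_eq_card K).symm)
  exact LinearMap.range_eq_top.mp hrange

section AffineRecursion

variable {𝕜 ι κ μ τ : Type*} [Ring 𝕜] [TopologicalSpace 𝕜] [IsTopologicalRing 𝕜]
  [Fintype ι] [Fintype μ]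

theorem eventually_sub_mulVec_eq [DecidableEq ι] {U : Set (μ → 𝕜)} (hU : IsOpen U)
    {B : Matrix ι μ 𝕜} {R : Matrix μ ι 𝕜} (hBR : B * R = 1) {D : Matrix τ μ 𝕜}
    {f : (ι → 𝕜) → τ → 𝕜} {p : ι → 𝕜} {q : τ → 𝕜}
    (hf : ∀ u ∈ U, f (p + B *ᵥ u) = q + D *ᵥ u) {u : μ → 𝕜} (hu : u ∈ U) :
    ∀ᶠ a in 𝓝 (p + B *ᵥ u),
      f a - (D * R) *ᵥ a = f (p + B *ᵥ u) - (D * R) *ᵥ (p + B *ᵥ u) := by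
  set y := p + B *ᵥ u with hy
  have hcont : Continuous fun a => u + R *ᵥ (a - y) := by fun_prop
  have hinput : ∀ᶠ a in 𝓝 y, u + R *ᵥ (a - y) ∈ U :=
    hcont.continuousAt.eventually_mem (hU.mem_nhds (by simpa using hu))
  filter_upwards [hinput] with a ha
  have hreach : p + B *ᵥ (u + R *ᵥ (a - y)) = a := by
    rw [mulVec_add, mulVec_mulVec, hBR, one_mulVec, ← add_assoc, ← hy, add_sub_cancel]
  have hincrement : f a = f y + (D * R) *ᵥ (a - y) :=
    calc f a = q + D *ᵥ (u + R *ᵥ (a - y)) := by rw [← hf _ ha, hreach]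
      _ = f y + (D * R) *ᵥ (a - y) := by rw [mulVec_add, mulVec_mulVec, ← add_assoc, hf u hu]
  rw [hincrement, mulVec_sub]
  abel

variable {X : Set (ι ⊕ κ → 𝕜)} {U : Set (μ → 𝕜)} {Φ₁ : (ι ⊕ κ → 𝕜) → ι → 𝕜}
  {Φ₂ : (ι ⊕ κ → 𝕜) → κ → 𝕜} {B₁ : Matrix ι μ 𝕜}

theorem exists_eq_mulVec_add_of_comp_eq_add_mulVec
    (hX : ∀ c : κ → 𝕜, IsPreconnected {a : ι → 𝕜 | Sum.elim a c ∈ X}) (hU : IsOpen U)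
    (hB₁ : Function.Surjective B₁.mulVec)
    (hsurj : ∀ y ∈ X, ∃ x ∈ X, ∃ u ∈ U, Sum.elim (Φ₁ x + B₁ *ᵥ u) (Φ₂ x) = y)
    {Ψ Ψt : (ι ⊕ κ → 𝕜) → τ → 𝕜} {D : Matrix τ μ 𝕜}
    (hΨ : ∀ x ∈ X, ∀ u ∈ U, Ψ (Sum.elim (Φ₁ x + B₁ *ᵥ u) (Φ₂ x)) = Ψt x + D *ᵥ u) :
    ∃ (C : Matrix τ ι 𝕜) (g : (κ → 𝕜) → τ → 𝕜),
      ∀ x ∈ X, Ψ x = C *ᵥ (x ∘ Sum.inl) + g (x ∘ Sum.inr) := by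
  classical
  obtain ⟨R, hR⟩ := mulVec_surjective_iff_exists_right_inverse.mp hB₁
  have hslice (c : κ → 𝕜) :
      ∃ v, ∀ a ∈ {a | Sum.elim a c ∈ X}, Ψ (Sum.elim a c) - (D * R) *ᵥ a = v := by
    refine exists_forall_eq_of_isPreconnected (hX c) fun a ha =>
      eventually_nhdsWithin_of_eventually_nhds ?_
    obtain ⟨x, hx, u, hu, hxu⟩ := hsurj _ ha
    obtain ⟨rfl, rfl⟩ := Sum.elim_eq_iff.mp hxu
    exact eventually_sub_mulVec_eq hU hR (hΨ x hx) hu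
  choose g hg using hslice
  refine ⟨D * R, g, fun x hx => ?_⟩
  have hgx := hg (x ∘ Sum.inr) (x ∘ Sum.inl) (by simpa using hx)
  rwa [Sum.elim_comp_inl_inr, sub_eq_iff_eq_add'] at hgx

theorem two_layer_affine_recursion_rank_deficient_general
    (hX : ∀ c : κ → 𝕜, IsPreconnected {a : ι → 𝕜 | Sum.elim a c ∈ X}) (hU : IsOpen U)
    (hB₁ : Function.Surjective B₁.mulVec)
    (hsurj : ∀ y ∈ X, ∃ x ∈ X, ∃ u ∈ U, Sum.elim (Φ₁ x + B₁ *ᵥ u) (Φ₂ x) = y)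
    {Φt : (ι ⊕ κ → 𝕜) → ι ⊕ κ → 𝕜} {Bt : Matrix (ι ⊕ κ) μ 𝕜}
    (hrec : ∀ x ∈ X, ∀ u ∈ U,
      Sum.elim (Φ₁ (Sum.elim (Φ₁ x + B₁ *ᵥ u) (Φ₂ x)))
        (Φ₂ (Sum.elim (Φ₁ x + B₁ *ᵥ u) (Φ₂ x))) = Φt x + Bt *ᵥ u) :
    ∃ (C₁ : Matrix ι ι 𝕜) (C₂ : Matrix κ ι 𝕜)
      (g₁ : (κ → 𝕜) → ι → 𝕜) (g₂ : (κ → 𝕜) → κ → 𝕜),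
      ∀ x ∈ X,
        Φ₁ x = C₁ *ᵥ (x ∘ Sum.inl) + g₁ (x ∘ Sum.inr) ∧
        Φ₂ x = C₂ *ᵥ (x ∘ Sum.inl) + g₂ (x ∘ Sum.inr) := by
  obtain ⟨C₁, g₁, h₁⟩ := exists_eq_mulVec_add_of_comp_eq_add_mulVec hX hU hB₁ hsurj
    (Ψ := Φ₁) (Ψt := fun x => Φt x ∘ Sum.inl) (D := Bt.toRows₁)
    fun x hx u hu => congrArg (· ∘ Sum.inl) (hrec x hx u hu)
  obtain ⟨C₂, g₂, h₂⟩ := exists_eq_mulVec_add_of_comp_eq_add_mulVec hX hU hB₁ hsurj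
    (Ψ := Φ₂) (Ψt := fun x => Φt x ∘ Sum.inr) (D := Bt.toRows₂)
    fun x hx u hu => congrArg (· ∘ Sum.inr) (hrec x hx u hu)
  exact ⟨C₁, C₂, g₁, g₂, fun x hx => ⟨h₁ x hx, h₂ x hx⟩⟩

end AffineRecursion

/-- **Two-layer affine recursion with rank-deficient coefficient.**
The state is written `x = col(x₁, x₂)` (indexed by `Fin n₁ ⊕ Fin n₂`), the dynamics are
`Φ(x) + Bu` with `Φ = col(Φ₁, Φ₂)` and `B = col(B₁, 0)` where `B₁` has full row rank.
If (A1) the dynamics map `𝒳 × 𝒰` into `𝒳` and are surjective onto `𝒳`, and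
(A2) the two-layer composition `Φ(Φ(x) + Bu)` equals `Φ̃(x) + B̃u` on `𝒳 × 𝒰`, then both
`Φ₁` and `Φ₂` are affine in `x₁`: `Φ₁(x₁,x₂) = C₁x₁ + g₁(x₂)` and
`Φ₂(x₁,x₂) = C₂x₁ + g₂(x₂)` on `𝒳`. -/
theorem two_layer_affine_recursion_rank_deficient
    {n₁ n₂ m : ℕ} (X : Set ((Fin n₁ ⊕ Fin n₂) → ℝ)) (U : Set (Fin m → ℝ))
    (hXopen : IsOpen X) (hXconv : Convex ℝ X) (hUopen : IsOpen U)
    (Φ₁ : ((Fin n₁ ⊕ Fin n₂) → ℝ) → Fin n₁ → ℝ)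
    (Φ₂ : ((Fin n₁ ⊕ Fin n₂) → ℝ) → Fin n₂ → ℝ)
    (B₁ : Matrix (Fin n₁) (Fin m) ℝ) (hB₁ : B₁.rank = n₁)
    (hmem : ∀ x ∈ X, ∀ u ∈ U, Sum.elim (Φ₁ x + B₁.mulVec u) (Φ₂ x) ∈ X)
    (hsurj : ∀ y ∈ X, ∃ x ∈ X, ∃ u ∈ U, Sum.elim (Φ₁ x + B₁.mulVec u) (Φ₂ x) = y)
    (Φt : ((Fin n₁ ⊕ Fin n₂) → ℝ) → ((Fin n₁ ⊕ Fin n₂) → ℝ))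
    (Bt : Matrix (Fin n₁ ⊕ Fin n₂) (Fin m) ℝ)
    (hrec : ∀ x ∈ X, ∀ u ∈ U,
      Sum.elim (Φ₁ (Sum.elim (Φ₁ x + B₁.mulVec u) (Φ₂ x)))
               (Φ₂ (Sum.elim (Φ₁ x + B₁.mulVec u) (Φ₂ x)))
        = Φt x + Bt.mulVec u) :
    ∃ (C₁ : Matrix (Fin n₁) (Fin n₁) ℝ) (C₂ : Matrix (Fin n₂) (Fin n₁) ℝ)
      (g₁ : (Fin n₂ → ℝ) → Fin n₁ → ℝ) (g₂ : (Fin n₂ → ℝ) → Fin n₂ → ℝ),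
      ∀ x ∈ X,
        Φ₁ x = C₁.mulVec (x ∘ Sum.inl) + g₁ (x ∘ Sum.inr) ∧
        Φ₂ x = C₂.mulVec (x ∘ Sum.inl) + g₂ (x ∘ Sum.inr) :=
  two_layer_affine_recursion_rank_deficient_general
    (fun c => (convex_setOf_sumElim_mem hXconv c).isPreconnected) hUopen
    (mulVec_surjective_of_rank_eq_card_s5 (by simpa using hB₁)) hsurj hrec
end
end

section
/- (Principle of affine composition.) Let 𝒳 ⊆ ℝ^n and 𝒰 ⊆ ℝ^m be open sets, g₁ : 𝒳 → ℝ^{n₁} and l₁ : 𝒳 → ℝ^{n₂} be arbitrary functions, and C₁ ∈ ℝ^{n₁×m} have full row rank. Define 𝒳̄ := { (x₁, x₂) ∈ ℝ^{n₁+n₂} : (x₁, x₂) = (g₁(x) + C₁u, l₁(x)) for some x ∈ 𝒳, u ∈ 𝒰 }, and let f : 𝒳̄ → ℝ^{n₃} be an arbitrary function. Suppose (A1) 𝒳̄ is open and convex; and (A2) there exist a function g₂ : 𝒳 → ℝ^{n₃} and a matrix C₂ ∈ ℝ^{n₃×m} such that f(g₁(x) + C₁u, l₁(x)) = g₂(x)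 + C₂u for all x ∈ 𝒳 and u ∈ 𝒰. Then f is affine in its first argument on 𝒳̄: there exist a matrix C ∈ ℝ^{n₃×n₁} and a function g : proj_{x₂}(𝒳̄) → ℝ^{n₃} such that f(x₁, x₂) = Cx₁ + g(x₂) for all (x₁, x₂) ∈ 𝒳̄. -/
open Matrix

noncomputable section

/-!
For fixed `x`, the point `g₁ x + C₁ u` determines `g₂ x + C₂ u` through `f`, so `C₂` is constant
along the part of each fibre of `C₁` inside the open set `U`.  Hence `ker C₁ ≤ ker C₂`, that is,
`C₂ = C ∘ C₁` for some linear map `C`.  Since `C₁` is an open map, the points `g₁ x + C₁ u` with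
`u ∈ U` fill an open part of the slice `x₂ = l₁ x`, and there `f(x₁, x₂) - C x₁` has the constant
value `g₂ x - C (g₁ x)`.  So `f(x₁, x₂) - C x₁` is locally constant on each slice of the domain;
slices of a convex set are convex, thus preconnected, and the difference depends on `x₂` only.
-/

open Filter Topology

section LinearFactorization

variable {𝕜 V E F : Type*} [AddCommGroup V] [AddCommGroup E] [AddCommGroup F]

theorem exists_comp_eq_of_ker_le_ker_s6 [DivisionRing 𝕜] [Module 𝕜 V] [Module 𝕜 E] [Module 𝕜 F]
    {A : V →ₗ[𝕜] E} {B : V →ₗ[𝕜] F} (h : A.ker ≤ B.ker) : ∃ C : E →ₗ[𝕜] F, C ∘ₗ A = B := by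
  obtain ⟨L, hL⟩ := (A.ker.liftQ A le_rfl).exists_leftInverse_of_injective
    (A.ker.ker_liftQ_eq_bot A le_rfl le_rfl)
  refine ⟨A.ker.liftQ B h ∘ₗ L, ?_⟩
  calc (A.ker.liftQ B h ∘ₗ L) ∘ₗ A
      = A.ker.liftQ B h ∘ₗ (L ∘ₗ A.ker.liftQ A le_rfl) ∘ₗ A.ker.mkQ := by
        rw [LinearMap.comp_assoc, LinearMap.comp_assoc, Submodule.liftQ_mkQ]
    _ = B := by rw [hL, LinearMap.id_comp, Submodule.liftQ_mkQ]

theorem ker_le_ker_of_eventually [DivisionRing 𝕜] [TopologicalSpace 𝕜] [(𝓝[≠] (0 : 𝕜)).NeBot]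
    [Module 𝕜 V] [Module 𝕜 E] [Module 𝕜 F]
    [TopologicalSpace V] [ContinuousAdd V] [ContinuousSMul 𝕜 V]
    {A : V →ₗ[𝕜] E} {B : V →ₗ[𝕜] F} {u : V} (h : ∀ᶠ w in 𝓝 u, A w = A u → B w = B u) :
    A.ker ≤ B.ker := by
  intro v hv
  rw [LinearMap.mem_ker] at hv ⊢
  have htendsto : Tendsto (fun t : 𝕜 => u + t • v) (𝓝[≠] 0) (𝓝 u) := by
    have hcont : Continuous fun t : 𝕜 => u + t • v := by fun_prop
    simpa only [zero_smul, add_zero] using (hcont.tendsto 0).mono_left nhdsWithin_le_nhds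
  obtain ⟨t, ht, ht0⟩ := ((htendsto.eventually h).and self_mem_nhdsWithin).exists
  have hBu : B (u + t • v) = B u := ht (by rw [map_add, map_smul, hv, smul_zero, add_zero])
  rw [map_add, map_smul, add_eq_left] at hBu
  exact (smul_eq_zero.mp hBu).resolve_left ht0

end LinearFactorization

theorem exists_eq_snd_of_isPreconnected_slices {E β γ : Type*} [TopologicalSpace E] [Nonempty γ]
    {S : Set (E × β)} (hS : ∀ b, IsPreconnected {a | (a, b) ∈ S}) {φ : E → β → γ}
    (hφ : ∀ p ∈ S, ∀ᶠ a in 𝓝[{a | (a, p.2) ∈ S}] p.1, φ a p.2 = φ p.1 p.2) :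
    ∃ g : β → γ, ∀ p ∈ S, φ p.1 p.2 = g p.2 := by
  have hconst : ∀ b a a', (a, b) ∈ S → (a', b) ∈ S → φ a b = φ a' b := fun b a a' ha ha' =>
    (hS b).induction₂ (fun a a' => φ a b = φ a' b)
      (fun a ha => (hφ (a, b) ha).mono fun _ => Eq.symm)
      (fun _ _ _ _ _ _ => Eq.trans) (fun _ _ _ _ => Eq.symm) ha ha'
  have hfactors : Function.FactorsThrough (fun p : S => φ p.1.1 p.1.2) (fun p : S => p.1.2) := by
    rintro ⟨⟨a, b⟩, ha⟩ ⟨⟨a', b'⟩, ha'⟩ (rfl : b = b')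
    exact hconst b a a' ha ha'
  obtain ⟨g, hg⟩ := (Function.factorsThrough_iff _).mp hfactors
  exact ⟨g, fun p hp => congrFun hg ⟨p, hp⟩⟩

theorem eventually_sub_eq_of_isOpenMap {V E F G : Type*} [TopologicalSpace V]
    [AddCommGroup E] [TopologicalSpace E] [ContinuousAdd E] [AddCommGroup F]
    [FunLike G E F] [AddMonoidHomClass G E F]
    {A : V → E} (hA : IsOpenMap A) {C : G} {φ : E → F} {k : E} {d : F} {u : V}
    (hφ : ∀ᶠ w in 𝓝 u, φ (k + A w) = d + C (A w)) :
    ∀ᶠ a in 𝓝 (k + A u), φ a - C a = φ (k + A u) - C (k + A u) := by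
  have hvalue : ∀ᶠ w in 𝓝 u, φ (k + A w) - C (k + A w) = d - C k :=
    hφ.mono fun w hw => by rw [hw, map_add, add_sub_add_right_eq_sub]
  have hopen : IsOpenMap fun w => k + A w := (isOpenMap_add_left k).comp hA
  refine hopen.nhds_le u (eventually_map.mpr ?_)
  exact hvalue.mono fun w hw => hw.trans hvalue.self_of_nhds.symm

theorem convex_slice {𝕜 E F : Type*} [Ring 𝕜] [PartialOrder 𝕜] [AddCommGroup E] [AddCommGroup F]
    [Module 𝕜 E] [Module 𝕜 F] {S : Set (E × F)} (hS : Convex 𝕜 S) (b : F) :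
    Convex 𝕜 {a | (a, b) ∈ S} :=
  hS.affine_preimage ((AffineMap.id 𝕜 E).prod (AffineMap.const 𝕜 E b))

theorem mulVecLin_surjective_of_rank_eq_card {K ι κ : Type*} [Field K] [Fintype ι] [Fintype κ]
    {A : Matrix ι κ K} (hA : A.rank = Fintype.card ι) : Function.Surjective A.mulVecLin := by
  refine LinearMap.range_eq_top.mp (Submodule.eq_top_of_finrank_eq ?_)
  rw [Module.finrank_fintype_fun_eq_card, ← hA, Matrix.rank]

theorem principle_of_affine_composition_general
    {𝕜 V E F α β : Type*} [DivisionRing 𝕜] [TopologicalSpace 𝕜] [(𝓝[≠] (0 : 𝕜)).NeBot]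
    [AddCommGroup V] [Module 𝕜 V] [TopologicalSpace V] [ContinuousAdd V] [ContinuousSMul 𝕜 V]
    [AddCommGroup E] [Module 𝕜 E] [TopologicalSpace E] [ContinuousAdd E]
    [AddCommGroup F] [Module 𝕜 F]
    (X : Set α) (U : Set V) (hU : IsOpen U) (g₁ : α → E) (l₁ : α → β)
    (C₁ : V →ₗ[𝕜] E) (hC₁ : IsOpenMap C₁) (Xb : Set (E × β))
    (hXb : Xb = {p | ∃ x ∈ X, ∃ u ∈ U, p = (g₁ x + C₁ u, l₁ x)})
    (f : E → β → F) (hslice : ∀ b, IsPreconnected {a | (a, b) ∈ Xb})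
    (g₂ : α → F) (C₂ : V →ₗ[𝕜] F)
    (hrec : ∀ x ∈ X, ∀ u ∈ U, f (g₁ x + C₁ u) (l₁ x) = g₂ x + C₂ u) :
    ∃ (C : E →ₗ[𝕜] F) (g : β → F), ∀ p ∈ Xb, f p.1 p.2 = C p.1 + g p.2 := by
  obtain rfl | hne := Xb.eq_empty_or_nonempty
  · exact ⟨0, 0, fun _ hp => hp.elim⟩
  subst hXb
  obtain ⟨_, x₀, hx₀, u₀, hu₀, -⟩ := hne
  have hker : C₁.ker ≤ C₂.ker := by
    refine ker_le_ker_of_eventually (u := u₀) ?_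
    filter_upwards [hU.mem_nhds hu₀] with w hw hwu
    apply add_left_cancel (a := g₂ x₀)
    rw [← hrec x₀ hx₀ w hw, ← hrec x₀ hx₀ u₀ hu₀, hwu]
  obtain ⟨C, rfl⟩ := exists_comp_eq_of_ker_le_ker_s6 hker
  have hlocal : ∀ p ∈ {p | ∃ x ∈ X, ∃ u ∈ U, p = (g₁ x + C₁ u, l₁ x)},
      ∀ᶠ a in 𝓝 p.1, f a p.2 - C a = f p.1 p.2 - C p.1 := by
    rintro _ ⟨x, hx, u, hu, rfl⟩
    exact eventually_sub_eq_of_isOpenMap hC₁ (eventually_of_mem (hU.mem_nhds hu) (hrec x hx))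
  obtain ⟨g, hg⟩ := exists_eq_snd_of_isPreconnected_slices (φ := fun a b => f a b - C a) hslice
    fun p hp => nhdsWithin_le_nhds (hlocal p hp)
  exact ⟨C, g, fun p hp => sub_eq_iff_eq_add'.mp (hg p hp)⟩

/-- **Principle of affine composition.**  Let `𝒳 ⊆ ℝ^n` and `𝒰 ⊆ ℝ^m` be open, `g₁`, `l₁`
arbitrary functions, and `C₁ ∈ ℝ^{n₁×m}` of full row rank.  Let
`𝒳̄ = {(g₁(x) + C₁u, l₁(x)) : x ∈ 𝒳, u ∈ 𝒰}` and let `f : 𝒳̄ → ℝ^{n₃}` be arbitrary.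
If (A1) `𝒳̄` is open and convex, and (A2) `f(g₁(x) + C₁u, l₁(x)) = g₂(x) + C₂u` on `𝒳 × 𝒰`,
then `f` is affine in its first argument on `𝒳̄`: `f(x₁,x₂) = Cx₁ + g(x₂)` for all
`(x₁,x₂) ∈ 𝒳̄`. -/
theorem principle_of_affine_composition
    {n m n₁ n₂ n₃ : ℕ} (X : Set (Fin n → ℝ)) (U : Set (Fin m → ℝ))
    (hXopen : IsOpen X) (hUopen : IsOpen U)
    (g₁ : (Fin n → ℝ) → Fin n₁ → ℝ) (l₁ : (Fin n → ℝ) → Fin n₂ → ℝ)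
    (C₁ : Matrix (Fin n₁) (Fin m) ℝ) (hC₁ : C₁.rank = n₁)
    (Xb : Set ((Fin n₁ → ℝ) × (Fin n₂ → ℝ)))
    (hXb : Xb = {p | ∃ x ∈ X, ∃ u ∈ U, p = (g₁ x + C₁.mulVec u, l₁ x)})
    (f : (Fin n₁ → ℝ) → (Fin n₂ → ℝ) → Fin n₃ → ℝ)
    (hXbopen : IsOpen Xb) (hXbconv : Convex ℝ Xb)
    (g₂ : (Fin n → ℝ) → Fin n₃ → ℝ) (C₂ : Matrix (Fin n₃) (Fin m) ℝ)
    (hrec : ∀ x ∈ X, ∀ u ∈ U, f (g₁ x + C₁.mulVec u) (l₁ x) = g₂ x + C₂.mulVec u) :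
    ∃ (C : Matrix (Fin n₃) (Fin n₁) ℝ) (g : (Fin n₂ → ℝ) → Fin n₃ → ℝ),
      ∀ p ∈ Xb, f p.1 p.2 = C.mulVec p.1 + g p.2 := by
  obtain ⟨C, g, h⟩ := principle_of_affine_composition_general X U hUopen g₁ l₁ C₁.mulVecLin
    (C₁.mulVecLin.isOpenMap_of_finiteDimensional
      (mulVecLin_surjective_of_rank_eq_card (by rw [hC₁, Fintype.card_fin])))
    Xb hXb f (fun b => (convex_slice hXbconv b).isPreconnected) g₂ C₂.mulVecLin hrec
  exact ⟨C.toMatrix', g, fun p hp => by rw [LinearMap.toMatrix'_mulVec, h p hp]⟩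
end
end

section
/- (Observable Koopman linear embedding.) Consider a discrete-time controlled system x⁺ = f(x,u), and suppose it admits a Koopman linear embedding with lifting function Ψ : 𝒳 → ℝ^{n_z} and matrices (A_K, B_K, C_K), where the pair (A_K, C_K) is not observable. Then the system also admits a Koopman linear embedding with another lifting function Ψ̄ : 𝒳 → ℝ^{n̄_z} and matrices (Ā_K, B̄_K, C̄_K), i.e., Ψ̄(f(x,u)) = Ā_K Ψ̄(x) + B̄_K u and x = C̄_K Ψ̄(x) for all x ∈ 𝒳, u ∈ 𝒰, such that the pair (Ā_K, C̄_K) is observable. -/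
open Matrix

noncomputable section

/-- `Ψ, A, B, C` form a Koopman linear embedding of the system `x⁺ = f(x,u)` on `X`, `U`. -/
def IsKoopmanLinearEmbedding {n m nz : ℕ}
    (f : (Fin n → ℝ) → (Fin m → ℝ) → (Fin n → ℝ))
    (X : Set (Fin n → ℝ)) (U : Set (Fin m → ℝ))
    (Ψ : (Fin n → ℝ) → Fin nz → ℝ)
    (A : Matrix (Fin nz) (Fin nz) ℝ) (B : Matrix (Fin nz) (Fin m) ℝ)
    (C : Matrix (Fin n) (Fin nz) ℝ) : Prop :=
  LinearIndependent ℝ (fun i : Fin nz => fun x : X => Ψ (x : Fin n → ℝ) i) ∧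
  (∀ x ∈ X, ∀ u ∈ U, Ψ (f x u) = A.mulVec (Ψ x) + B.mulVec u) ∧
  (∀ x ∈ X, x = C.mulVec (Ψ x))

/-- The matrix pair `(A, C)` is observable: the observability matrix
`col(C, CA, …, CA^{p−1})` has rank `p`. -/
def Observable {p q : ℕ} (A : Matrix (Fin p) (Fin p) ℝ)
    (C : Matrix (Fin q) (Fin p) ℝ) : Prop :=
  (Matrix.of fun il : Fin p × Fin q => fun j : Fin p =>
      (C * A ^ (il.1 : ℕ)) il.2 j).rank = p

/-!
The vectors annihilated by every `C * A ^ k` form an `A`-invariant subspace contained in the kernel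
of `C`, so the pair `(A, C)` descends to the quotient by it, and the quotient pair annihilates no
nonzero vector in this way. Cayley–Hamilton identifies that property with the rank condition. In
coordinates the quotient map is a matrix `P`, and `P *ᵥ Ψ` is the new lifting function: as `P` is
surjective, no nontrivial combination of the coordinates of `P *ᵥ Ψ` vanishes unless one of `Ψ`
does.
-/

section UnobservableSubmodule

variable {R M M' N : Type*} [CommRing R] [AddCommGroup M] [Module R M] [AddCommGroup M']
  [Module R M'] [AddCommGroup N] [Module R N]

/-- The unobservable submodule of a linear system with state map `A` and output map `C`: the states
whose output `C (A ^ k x)` vanishes at all times `k`. The state space may be infinite-dimensional,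
so `k` is not bounded by its dimension. -/
def unobservableSubmodule (A : Module.End R M) (C : M →ₗ[R] N) : Submodule R M :=
  ⨅ k : ℕ, (C ∘ₗ A ^ k).ker

theorem mem_unobservableSubmodule {A : Module.End R M} {C : M →ₗ[R] N} {x : M} :
    x ∈ unobservableSubmodule A C ↔ ∀ k : ℕ, C ((A ^ k) x) = 0 := by
  simp [unobservableSubmodule]

theorem unobservableSubmodule_le_comap (A : Module.End R M) (C : M →ₗ[R] N) :
    unobservableSubmodule A C ≤ (unobservableSubmodule A C).comap A := by
  intro x hx
  rw [Submodule.mem_comap, mem_unobservableSubmodule]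
  intro k
  rw [← Module.End.mul_apply, ← pow_succ]
  exact mem_unobservableSubmodule.mp hx (k + 1)

theorem unobservableSubmodule_le_ker (A : Module.End R M) (C : M →ₗ[R] N) :
    unobservableSubmodule A C ≤ C.ker :=
  iInf_le (fun k : ℕ => (C ∘ₗ A ^ k).ker) 0

theorem comap_unobservableSubmodule {A : Module.End R M} {C : M →ₗ[R] N} {A' : Module.End R M'}
    {C' : M' →ₗ[R] N} {P : M →ₗ[R] M'} (hA : A' ∘ₗ P = P ∘ₗ A) (hC : C' ∘ₗ P = C) :
    (unobservableSubmodule A' C').comap P = unobservableSubmodule A C := by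
  have houtput (k : ℕ) : (C' ∘ₗ A' ^ k) ∘ₗ P = C ∘ₗ A ^ k := by
    rw [LinearMap.comp_assoc, Module.End.commute_pow_left_of_commute hA, ← LinearMap.comp_assoc, hC]
  simp only [unobservableSubmodule, Submodule.comap_iInf, ← LinearMap.ker_comp, houtput]

theorem unobservableSubmodule_eq_bot_of_surjective {A : Module.End R M} {C : M →ₗ[R] N}
    {A' : Module.End R M'} {C' : M' →ₗ[R] N} {P : M →ₗ[R] M'} (hP : Function.Surjective P)
    (hker : P.ker = unobservableSubmodule A C) (hA : A' ∘ₗ P = P ∘ₗ A) (hC : C' ∘ₗ P = C) :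
    unobservableSubmodule A' C' = ⊥ :=
  Submodule.comap_injective_of_surjective hP <| by
    rw [comap_unobservableSubmodule hA hC, ← hker, LinearMap.ker]

theorem pow_mem_span_pow_lt_finrank [Nontrivial R] [Module.Finite R M] [Module.Free R M]
    (A : Module.End R M) (k : ℕ) :
    A ^ k ∈ Submodule.span R (Set.range fun i : Fin (Module.finrank R M) => A ^ (i : ℕ)) := by
  refine PowerBasis.mem_span_pow'.mpr ⟨_, ?_, A.pow_eq_aeval_mod_charpoly k⟩
  rw [← A.charpoly_natDegree, ← Polynomial.degree_eq_natDegree A.charpoly_monic.ne_zero]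
  exact Polynomial.degree_modByMonic_lt _ A.charpoly_monic

theorem mem_unobservableSubmodule_iff_forall_fin [Nontrivial R] [Module.Finite R M]
    [Module.Free R M] {A : Module.End R M} {C : M →ₗ[R] N} {x : M} :
    x ∈ unobservableSubmodule A C ↔ ∀ k : Fin (Module.finrank R M), C ((A ^ (k : ℕ)) x) = 0 := by
  refine mem_unobservableSubmodule.trans ⟨fun h k => h k, fun h k => ?_⟩
  have hspan : Submodule.span R (Set.range fun i : Fin (Module.finrank R M) => A ^ (i : ℕ)) ≤
      (C ∘ₗ LinearMap.applyₗ x).ker :=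
    Submodule.span_le.mpr (Set.range_subset_iff.mpr h)
  exact hspan (pow_mem_span_pow_lt_finrank A k)

end UnobservableSubmodule

theorem exists_surjective_unobservableSubmodule_eq_bot {K V W : Type*} [Field K] [AddCommGroup V]
    [Module K V] [FiniteDimensional K V] [AddCommGroup W] [Module K W] (A : Module.End K V)
    (C : V →ₗ[K] W) :
    ∃ (d : ℕ) (P : V →ₗ[K] Fin d → K) (A' : Module.End K (Fin d → K)) (C' : (Fin d → K) →ₗ[K] W),
      Function.Surjective P ∧ A' ∘ₗ P = P ∘ₗ A ∧ C' ∘ₗ P = C ∧ unobservableSubmodule A' C' = ⊥ := by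
  let S := unobservableSubmodule A C
  let e := (Module.finBasis K (V ⧸ S)).equivFun
  let P := e.toLinearMap ∘ₗ S.mkQ
  let A' := e.conj (S.mapQ S A (unobservableSubmodule_le_comap A C))
  let C' := S.liftQ C (unobservableSubmodule_le_ker A C) ∘ₗ e.symm.toLinearMap
  have hP : Function.Surjective P := e.surjective.comp S.mkQ_surjective
  have hker : P.ker = S := by rw [LinearEquiv.ker_comp, S.ker_mkQ]
  have hA : A' ∘ₗ P = P ∘ₗ A := LinearMap.ext fun x => by simp [A', P, LinearEquiv.conj_apply]
  have hC : C' ∘ₗ P = C := LinearMap.ext fun x => by simp [C', P]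
  exact ⟨_, P, A', C', hP, hA, hC, unobservableSubmodule_eq_bot_of_surjective hP hker hA hC⟩

theorem rank_eq_card_iff_ker_mulVecLin_eq_bot {K ι κ : Type*} [Field K] [Fintype ι]
    (M : Matrix κ ι K) : M.rank = Fintype.card ι ↔ M.mulVecLin.ker = ⊥ := by
  have hdim := M.mulVecLin.finrank_range_add_finrank_ker
  rw [Module.finrank_fintype_fun_eq_card] at hdim
  rw [Matrix.rank, ← Submodule.finrank_eq_zero]
  omega

theorem observable_iff_unobservableSubmodule_eq_bot {p q : ℕ} {A : Matrix (Fin p) (Fin p) ℝ}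
    {C : Matrix (Fin q) (Fin p) ℝ} :
    Observable A C ↔ unobservableSubmodule (toLin' A) (toLin' C) = ⊥ := by
  let O : Matrix (Fin p × Fin q) (Fin p) ℝ := Matrix.of fun il j => (C * A ^ (il.1 : ℕ)) il.2 j
  have hker : O.mulVecLin.ker = unobservableSubmodule (toLin' A) (toLin' C) := by
    ext x
    have hrow (k : Fin p) (l : Fin q) : (O *ᵥ x) (k, l) = toLin' C ((toLin' A ^ (k : ℕ)) x) l := by
      rw [← toLin'_pow, toLin'_apply, toLin'_apply, mulVec_mulVec]
      rfl
    simp only [LinearMap.mem_ker, mulVecLin_apply, mem_unobservableSubmodule_iff_forall_fin,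
      funext_iff, Prod.forall, hrow, Pi.zero_apply]
    rw [Module.finrank_fin_fun]
  rw [← hker, ← rank_eq_card_iff_ker_mulVecLin_eq_bot, Fintype.card_fin]
  rfl

section CoordinateIndependence

variable {R α ι κ : Type*} [CommSemiring R] [Fintype ι]

theorem linearIndependent_coord_iff {Φ : α → ι → R} :
    LinearIndependent R (fun i x => Φ x i) ↔
      Function.Injective fun (g : ι → R) (x : α) => g ⬝ᵥ Φ x := by
  rw [linearIndependent_iff_injective_fintypeLinearCombination]
  refine iff_of_eq (congrArg _ (funext₂ fun g x => ?_))
  simp [Fintype.linearCombination_apply, dotProduct]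

theorem vecMul_injective_of_mulVec_surjective [Fintype κ] {P : Matrix κ ι R}
    (hP : Function.Surjective P.mulVec) : Function.Injective fun g => g ᵥ* P := by
  intro g h hgh
  refine dotProduct_eq g h (hP.forall.mpr fun v => ?_)
  rw [dotProduct_mulVec, dotProduct_mulVec]
  exact congrArg (· ⬝ᵥ v) hgh

theorem linearIndependent_coord_mulVec [Finite κ] {Φ : α → ι → R}
    (hΦ : LinearIndependent R fun i x => Φ x i) {P : Matrix κ ι R}
    (hP : Function.Surjective P.mulVec) : LinearIndependent R fun i x => (P *ᵥ Φ x) i := by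
  have := Fintype.ofFinite κ
  rw [linearIndependent_coord_iff] at hΦ ⊢
  simp only [dotProduct_mulVec]
  exact hΦ.comp (vecMul_injective_of_mulVec_surjective hP)

end CoordinateIndependence

theorem IsKoopmanLinearEmbedding.mulVec {n m p d : ℕ} {f : (Fin n → ℝ) → (Fin m → ℝ) → Fin n → ℝ}
    {X : Set (Fin n → ℝ)} {U : Set (Fin m → ℝ)} {Ψ : (Fin n → ℝ) → Fin p → ℝ}
    {A : Matrix (Fin p) (Fin p) ℝ} {B : Matrix (Fin p) (Fin m) ℝ} {C : Matrix (Fin n) (Fin p) ℝ}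
    (h : IsKoopmanLinearEmbedding f X U Ψ A B C) {P : Matrix (Fin d) (Fin p) ℝ}
    {A' : Matrix (Fin d) (Fin d) ℝ} {C' : Matrix (Fin n) (Fin d) ℝ}
    (hP : Function.Surjective P.mulVec) (hA : A' * P = P * A) (hC : C' * P = C) :
    IsKoopmanLinearEmbedding f X U (fun x => P *ᵥ Ψ x) A' (P * B) C' := by
  obtain ⟨hindep, hdyn, hout⟩ := h
  refine ⟨linearIndependent_coord_mulVec hindep hP, fun x hx u hu => ?_, fun x hx => ?_⟩
  · simp only [hdyn x hx u hu, mulVec_add, mulVec_mulVec, hA]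
  · rw [mulVec_mulVec, hC]
    exact hout x hx

theorem observable_koopman_linear_embedding_general {n m nz : ℕ}
    {f : (Fin n → ℝ) → (Fin m → ℝ) → Fin n → ℝ} {X : Set (Fin n → ℝ)} {U : Set (Fin m → ℝ)}
    {Ψ : (Fin n → ℝ) → Fin nz → ℝ} {A : Matrix (Fin nz) (Fin nz) ℝ}
    {B : Matrix (Fin nz) (Fin m) ℝ} {C : Matrix (Fin n) (Fin nz) ℝ}
    (h : IsKoopmanLinearEmbedding f X U Ψ A B C) :
    ∃ (d : ℕ) (P : Matrix (Fin d) (Fin nz) ℝ) (A' : Matrix (Fin d) (Fin d) ℝ)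
      (C' : Matrix (Fin n) (Fin d) ℝ),
      IsKoopmanLinearEmbedding f X U (fun x => P *ᵥ Ψ x) A' (P * B) C' ∧ Observable A' C' := by
  obtain ⟨d, P, A', C', hP, hA, hC, hbot⟩ :=
    exists_surjective_unobservableSubmodule_eq_bot (toLin' A) (toLin' C)
  refine ⟨d, P.toMatrix', A'.toMatrix', C'.toMatrix', h.mulVec ?_ ?_ ?_, ?_⟩
  · simpa only [Function.Surjective, LinearMap.toMatrix'_mulVec] using hP
  · rw [← LinearMap.toMatrix'_comp, hA, LinearMap.toMatrix'_comp, LinearMap.toMatrix'_toLin']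
  · rw [← LinearMap.toMatrix'_comp, hC, LinearMap.toMatrix'_toLin']
  · rwa [observable_iff_unobservableSubmodule_eq_bot, toLin'_toMatrix', toLin'_toMatrix']

/-- **Observable Koopman linear embedding.**  If a system admits a Koopman linear embedding
whose matrix pair `(A_K, C_K)` is not observable, then it also admits a Koopman linear
embedding (with some other lifting function) whose matrix pair is observable. -/
theorem observable_koopman_linear_embedding
    {n m nz : ℕ} (f : (Fin n → ℝ) → (Fin m → ℝ) → (Fin n → ℝ))
    (X : Set (Fin n → ℝ)) (U : Set (Fin m → ℝ))
    (Ψ : (Fin n → ℝ) → Fin nz → ℝ)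
    (AK : Matrix (Fin nz) (Fin nz) ℝ) (BK : Matrix (Fin nz) (Fin m) ℝ)
    (CK : Matrix (Fin n) (Fin nz) ℝ)
    (hemb : IsKoopmanLinearEmbedding f X U Ψ AK BK CK)
    (hnotobs : ¬ Observable AK CK) :
    ∃ (nzb : ℕ) (Ψb : (Fin n → ℝ) → Fin nzb → ℝ)
      (Ab : Matrix (Fin nzb) (Fin nzb) ℝ) (Bb : Matrix (Fin nzb) (Fin m) ℝ)
      (Cb : Matrix (Fin n) (Fin nzb) ℝ),
      IsKoopmanLinearEmbedding f X U Ψb Ab Bb Cb ∧ Observable Ab Cb := by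
  obtain ⟨d, P, Ab, Cb, h⟩ := observable_koopman_linear_embedding_general hemb
  exact ⟨d, fun x => P *ᵥ Ψ x, Ab, P * BK, Cb, h⟩
end
end
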